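/- arXiv:1103.2105 — 3 statements merged into one kernel-verified Lean document; each statement's English description precedes it below -/
import Mathlib

section
/- The differential ideal [det'] of C, i.e., the ideal of C generated by the elements det^{(i)} for all i ≥ 1, is a prime ideal. -/
open MvPolynomial

/-- Variables of the differential polynomial ring `C = K{c₁₁, c₁₂, c₂₁, c₂₂}`:
the variable `((i, j), n)` represents `c_{ij}^{(n)}`, the `n`-th derivative of `c_{ij}`. -/
abbrev DVar : Type := (Fin 2 × Fin 2) × ℕ

/-- The differential polynomial ring `C = K{c₁₁, c₁₂, c₂₁, c₂₂}`. -/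
abbrev DiffPolyC (K : Type) [CommRing K] : Type := MvPolynomial DVar K

/-- `det = c₁₁·c₂₂ − c₁₂·c₂₁`. -/
noncomputable def detC (K : Type) [CommRing K] : DiffPolyC K :=
  X ((0, 0), 0) * X ((1, 1), 0) - X ((0, 1), 0) * X ((1, 0), 0)

/-- `D : C → C` is the unique derivation extending the derivation `δ` of `K` and shifting
variables, i.e. `D(c_{ij}^{(n)}) = c_{ij}^{(n+1)}`. -/
def IsDiffStructure {K : Type} [CommRing K] (δ : K → K) (D : DiffPolyC K → DiffPolyC K) : Prop :=
  (∀ a b : K, δ (a + b) = δ a + δ b) ∧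
  (∀ a b : K, δ (a * b) = δ a * b + a * δ b) ∧
  (∀ f g : DiffPolyC K, D (f + g) = D f + D g) ∧
  (∀ f g : DiffPolyC K, D (f * g) = D f * g + f * D g) ∧
  (∀ a : K, D (C a) = C (δ a)) ∧
  (∀ v : DVar, D (X v) = X (v.1, v.2 + 1))

/-!
Write `a`, `b`, `c`, `d` for the entries of the matrix, row by row. Give `a_n` and `d_n` level
`2n + 1`, `b_n` level `2n + 2` and `c_n` level `2n`. By the Leibniz rule every term of `det^{(k)}`
is a product of two variables of total level `2k + 2`, and exactly one term has both variables on
level `k + 1`; a weight favouring balanced products makes that term leading. The leading monomials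
of different derivatives involve different levels, hence are coprime, so the products of powers of
the `det^{(k)}`, `k ≥ 1`, with standard monomials form a basis of the polynomial ring. As `a_0` has
level `1`, it occurs in none of these leading monomials, so multiplication by `a_0` sends distinct
basis elements to distinct basis elements with the same powers of the `det^{(k)}`; therefore it is
injective modulo the ideal `I` of all `det^{(k)}`, `k ≥ 1`.

Once `a_0` is inverted, the equations `det^{(k)} = 0`, `k ≥ 1`, determine `d_1, d_2, …` recursively.
Substituting the solution for the `d_k` gives a homomorphism from `C` to the domain `C[1 / a_0]`
that kills `I`. The canonical map `C → (C / I)[1 / a_0]`, whose kernel is `I`, factors through it,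
so `I` is the kernel of a homomorphism to a domain.
-/

namespace JetDet

section LeadingTerm

variable {σ R M κ ι : Type*} [CommRing R] [AddCommMonoid M] [PartialOrder M]
  {w : (σ →₀ ℕ) →+ M}

/-- `f` is a unit multiple of the monomial with exponent `p`, plus terms of strictly smaller weight.
The weight `w` need not separate exponents, so it only plays the role of a monomial order. -/
def HasLeadingTerm (w : (σ →₀ ℕ) →+ M) (f : MvPolynomial σ R) (p : σ →₀ ℕ) : Prop :=
  ∃ u : Rˣ, f - monomial p (u : R) ∈ restrictSupport R {q | w q < w p}

theorem mul_mem_restrictSupport {s t : Set (σ →₀ ℕ)} {f g : MvPolynomial σ R}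
    (hf : f ∈ restrictSupport R s) (hg : g ∈ restrictSupport R t) {S : Set (σ →₀ ℕ)}
    (hS : ∀ p ∈ s, ∀ q ∈ t, p + q ∈ S) : f * g ∈ restrictSupport R S := by
  classical
  intro r hr
  obtain ⟨p, hp, q, hq, rfl⟩ := Finset.mem_add.1 (support_mul f g hr)
  exact hS p (hf hp) q (hg hq)

namespace HasLeadingTerm

theorem monomial_one (p : σ →₀ ℕ) : HasLeadingTerm w (monomial p (1 : R)) p :=
  ⟨1, by simp⟩

theorem mem_restrictSupport_le {f : MvPolynomial σ R} {p : σ →₀ ℕ} (hf : HasLeadingTerm w f p) :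
    f ∈ restrictSupport R {q | w q ≤ w p} := by
  obtain ⟨u, hu⟩ := hf
  rw [← sub_add_cancel f (monomial p (u : R))]
  exact add_mem (restrictSupport_mono R (fun q (hq : w q < w p) => hq.le) hu)
    ((monomial_mem_restrictSupport R).2 (.inl le_rfl))

theorem coeff_eq_zero {f : MvPolynomial σ R} {p q : σ →₀ ℕ} (hf : HasLeadingTerm w f p)
    (hqp : q ≠ p) (hlt : ¬ w q < w p) : coeff q f = 0 := by
  classical
  obtain ⟨u, hu⟩ := hf
  have h : coeff q (f - monomial p (u : R)) = 0 := notMem_support_iff.1 fun hq => hlt (hu hq)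
  rwa [coeff_sub, coeff_monomial, if_neg hqp.symm, sub_zero] at h

theorem isUnit_coeff {f : MvPolynomial σ R} {p : σ →₀ ℕ} (hf : HasLeadingTerm w f p) :
    IsUnit (coeff p f) := by
  classical
  obtain ⟨u, hu⟩ := hf
  have h : coeff p (f - monomial p (u : R)) = 0 :=
    notMem_support_iff.1 fun hp => lt_irrefl _ (hu hp)
  rw [coeff_sub, coeff_monomial, if_pos rfl, sub_eq_zero] at h
  exact h ▸ u.isUnit

theorem neg {f : MvPolynomial σ R} {p : σ →₀ ℕ} (hf : HasLeadingTerm w f p) :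
    HasLeadingTerm w (-f) p := by
  obtain ⟨u, hu⟩ := hf
  refine ⟨-u, ?_⟩
  rw [Units.val_neg, map_neg, ← neg_sub', neg_mem_iff]
  exact hu

theorem sub_of_mem {f g : MvPolynomial σ R} {p : σ →₀ ℕ} (hf : HasLeadingTerm w f p)
    (hg : g ∈ restrictSupport R {q | w q < w p}) : HasLeadingTerm w (f - g) p := by
  obtain ⟨u, hu⟩ := hf
  refine ⟨u, ?_⟩
  rw [sub_right_comm]
  exact sub_mem hu hg

theorem mul [IsOrderedCancelAddMonoid M] {f g : MvPolynomial σ R} {p q : σ →₀ ℕ}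
    (hf : HasLeadingTerm w f p) (hg : HasLeadingTerm w g q) :
    HasLeadingTerm w (f * g) (p + q) := by
  have hgle := hg.mem_restrictSupport_le
  obtain ⟨u, hu⟩ := hf
  obtain ⟨v, hv⟩ := hg
  refine ⟨u * v, ?_⟩
  have hsplit : f * g - monomial (p + q) ((u * v : Rˣ) : R) =
      (f - monomial p (u : R)) * g + monomial p (u : R) * (g - monomial q (v : R)) := by
    rw [Units.val_mul, ← monomial_mul]; ring
  rw [hsplit]
  refine add_mem (mul_mem_restrictSupport hu hgle fun a ha b hb => ?_)
    (mul_mem_restrictSupport (s := {p}) ((monomial_mem_restrictSupport R).2 (.inl rfl)) hv ?_)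
  · simpa only [Set.mem_ofPred_eq, map_add] using add_lt_add_of_lt_of_le ha hb
  · rintro _ rfl b hb
    simpa only [Set.mem_ofPred_eq, map_add] using add_lt_add_of_le_of_lt le_rfl hb

theorem pow [IsOrderedCancelAddMonoid M] {f : MvPolynomial σ R} {p : σ →₀ ℕ}
    (hf : HasLeadingTerm w f p) (n : ℕ) : HasLeadingTerm w (f ^ n) (n • p) := by
  induction n with
  | zero => simpa using monomial_one (R := R) (w := w) 0
  | succ n ih => rw [pow_succ, succ_nsmul]; exact ih.mul hf

theorem finsuppProd [IsOrderedCancelAddMonoid M] {F : ι → MvPolynomial σ R} {m : ι → σ →₀ ℕ}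
    (hF : ∀ i, HasLeadingTerm w (F i) (m i)) (n : ι →₀ ℕ) :
    HasLeadingTerm w (n.prod fun i k => F i ^ k) (Finsupp.linearCombination ℕ m n) := by
  induction n using Finsupp.induction_linear with
  | zero => simpa using monomial_one (R := R) (w := w) 0
  | add n n' hn hn' =>
    rw [Finsupp.prod_add_index' (fun _ => pow_zero _) (fun _ => pow_add _), map_add]
    exact hn.mul hn'
  | single i k =>
    rw [Finsupp.prod_single_index (h := fun i k => F i ^ k) (pow_zero _),
      Finsupp.linearCombination_single]
    exact (hF i).pow k

theorem linearIndependent {u : κ → MvPolynomial σ R} {e : κ → σ →₀ ℕ}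
    (hu : ∀ k, HasLeadingTerm w (u k) (e k)) (he : Function.Injective e) :
    LinearIndependent R u := by
  refine linearIndependent_iff.2 fun l hl => by_contra fun hne => ?_
  obtain ⟨k, hk, hmax⟩ :=
    l.support.exists_maximalFor (fun k => w (e k)) (Finsupp.support_nonempty_iff.2 hne)
  have hcoeff : coeff (e k) (Finsupp.linearCombination R u l) = l k * coeff (e k) (u k) := by
    rw [Finsupp.linearCombination_apply, Finsupp.sum, coeff_sum, Finset.sum_eq_single k]
    · rw [coeff_smul, smul_eq_mul]
    · intro j hj hjk
      have hlt : ¬ w (e k) < w (e j) := fun h => h.not_ge (hmax hj h.le)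
      rw [coeff_smul, (hu j).coeff_eq_zero (fun h => hjk (he h.symm)) hlt, smul_zero]
    · exact fun h => absurd hk h
  rw [hl, coeff_zero, eq_comm, (hu k).isUnit_coeff.mul_left_eq_zero] at hcoeff
  exact Finsupp.mem_support_iff.1 hk hcoeff

theorem top_le_span_range (hw : WellFounded fun p q => w p < w q)
    {u : κ → MvPolynomial σ R} {e : κ → σ →₀ ℕ} (hu : ∀ k, HasLeadingTerm w (u k) (e k))
    (he : Function.Surjective e) : ⊤ ≤ Submodule.span R (Set.range u) := by
  have hmonomial : ∀ p, monomial p (1 : R) ∈ Submodule.span R (Set.range u) := by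
    intro p
    induction p using hw.induction with
    | _ p ih =>
    obtain ⟨k, rfl⟩ := he p
    obtain ⟨c, hc⟩ := hu k
    have hlower : u k - monomial (e k) (c : R) ∈ Submodule.span R (Set.range u) := by
      rw [restrictSupport_eq_span] at hc
      refine Submodule.span_le.2 ?_ hc
      rintro _ ⟨q, hq, rfl⟩
      exact ih q hq
    have hlead := sub_mem (Submodule.subset_span (Set.mem_range_self k)) hlower
    rw [sub_sub_cancel] at hlead
    simpa [smul_monomial] using Submodule.smul_mem _ (↑c⁻¹ : R) hlead
  rw [← restrictSupport_univ, restrictSupport_eq_span, Submodule.span_le]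
  rintro _ ⟨p, -, rfl⟩
  exact hmonomial p

end HasLeadingTerm

end LeadingTerm

section StandardExponents

variable {σ ι : Type*} {m : ι → σ →₀ ℕ}

/-- The exponents of the monomials divisible by none of the monomials with exponent `m i`. -/
def standardExponents (m : ι → σ →₀ ℕ) : Set (σ →₀ ℕ) :=
  {r | ∀ i, ¬ m i ≤ r}

/-- The exponent of `∏ i, (X ^ m i) ^ n i * X ^ r`, where `x = (n, r)` and `r` is standard. -/
noncomputable def recompose (m : ι → σ →₀ ℕ) (x : (ι →₀ ℕ) × standardExponents m) : σ →₀ ℕ :=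
  Finsupp.linearCombination ℕ m x.1 + x.2

theorem linearCombination_apply_of_disjoint (hdisj : Pairwise fun i j => Disjoint (m i) (m j))
    (n : ι →₀ ℕ) {i : ι} {v : σ} (hv : m i v ≠ 0) :
    Finsupp.linearCombination ℕ m n v = n i * m i v := by
  rw [Finsupp.linearCombination_apply, Finsupp.sum_apply, Finsupp.sum_eq_single i]
  · rfl
  · intro j _ hji
    have hjv : m j v = 0 := Finsupp.notMem_support_iff.1 <|
      Finset.disjoint_right.1 ((Finsupp.disjoint_iff).1 (hdisj hji))
        (Finsupp.mem_support_iff.2 hv)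
    simp [hjv]
  · simp

theorem recompose_surjective (hm : ∀ i, m i ≠ 0) : Function.Surjective (recompose m) := by
  intro p
  induction p using WellFoundedLT.induction with
  | _ p ih =>
  by_cases hp : p ∈ standardExponents m
  · exact ⟨(0, ⟨p, hp⟩), by simp [recompose]⟩
  · obtain ⟨i, hi⟩ : ∃ i, m i ≤ p := by simpa [standardExponents] using hp
    have hlt : p - m i < p :=
      tsub_le_self.lt_of_ne fun h => hm i (by simpa [h] using tsub_add_cancel_of_le hi)
    obtain ⟨⟨n, r⟩, hnr⟩ := ih _ hlt
    refine ⟨(n + Finsupp.single i 1, r), ?_⟩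
    rw [← tsub_add_cancel_of_le hi, ← hnr]
    simp only [recompose, map_add, Finsupp.linearCombination_single, one_smul]
    abel

theorem multiplicity_le_of_recompose_eq (hdisj : Pairwise fun i j => Disjoint (m i) (m j))
    {x y : (ι →₀ ℕ) × standardExponents m} (h : recompose m x = recompose m y) : x.1 ≤ y.1 := by
  intro i
  by_contra! hlt
  refine y.2.2 i fun v => ?_
  by_cases hv : m i v = 0
  · simp [hv]
  · have hval := DFunLike.congr_fun h v
    simp only [recompose, Finsupp.add_apply, linearCombination_apply_of_disjoint hdisj _ hv]
      at hval
    have := Nat.mul_le_mul_right (m i v) (Nat.succ_le_of_lt hlt)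
    rw [Nat.succ_mul] at this
    omega

theorem recompose_injective (hdisj : Pairwise fun i j => Disjoint (m i) (m j)) :
    Function.Injective (recompose m) := by
  intro x y h
  have hn : x.1 = y.1 := le_antisymm (multiplicity_le_of_recompose_eq hdisj h)
    (multiplicity_le_of_recompose_eq hdisj h.symm)
  refine Prod.ext hn (Subtype.ext ?_)
  rwa [recompose, recompose, hn, add_right_inj] at h

end StandardExponents

section CoprimeLeadingTerms

variable {σ R M ι : Type*} [CommRing R] [AddCommMonoid M] [PartialOrder M]
  {w : (σ →₀ ℕ) →+ M} {F : ι → MvPolynomial σ R} {m : ι → σ →₀ ℕ}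

/-- The leading monomials, with exponents `m i`, of the polynomials `F i` are nonconstant and
pairwise coprime. The weight is required to be well-founded, as a monomial order would be. -/
structure HasCoprimeLeadingTerms (w : (σ →₀ ℕ) →+ M) (F : ι → MvPolynomial σ R)
    (m : ι → σ →₀ ℕ) : Prop where
  wellFounded : WellFounded fun p q => w p < w q
  hasLeadingTerm : ∀ i, HasLeadingTerm w (F i) (m i)
  ne_zero : ∀ i, m i ≠ 0
  disjoint : Pairwise fun i j => Disjoint (m i) (m j)

/-- The product `∏ i, F i ^ n i * X ^ r`, where `x = (n, r)` and `r` is standard. -/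
noncomputable def standardProduct (F : ι → MvPolynomial σ R)
    (x : (ι →₀ ℕ) × standardExponents m) : MvPolynomial σ R :=
  (x.1.prod fun i k => F i ^ k) * monomial (x.2 : σ →₀ ℕ) 1

theorem standardProduct_add_single (n : ι →₀ ℕ) (i : ι) (r : standardExponents m) :
    standardProduct F (n + Finsupp.single i 1, r) = F i * standardProduct F (n, r) := by
  simp only [standardProduct]
  rw [Finsupp.prod_add_index' (fun _ => pow_zero _) (fun _ => pow_add _),
    Finsupp.prod_single_index (h := fun i k => F i ^ k) (pow_zero _)]
  ring

theorem standardProduct_mem_span {x : (ι →₀ ℕ) × standardExponents m} (hx : x.1 ≠ 0) :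
    standardProduct F x ∈ Ideal.span (Set.range F) := by
  obtain ⟨n, r⟩ := x
  obtain ⟨i, hi⟩ := Finsupp.ne_iff.1 hx
  have hn : n - Finsupp.single i 1 + Finsupp.single i 1 = n :=
    tsub_add_cancel_of_le (Finsupp.single_le_iff.2 (Nat.one_le_iff_ne_zero.2 hi))
  rw [← hn, standardProduct_add_single]
  exact Ideal.mul_mem_right _ _ (Ideal.subset_span ⟨i, rfl⟩)

theorem add_single_mem_standardExponents {v : σ} (hv : ∀ i, m i v = 0) {r : σ →₀ ℕ}
    (hr : r ∈ standardExponents m) : r + Finsupp.single v 1 ∈ standardExponents m := by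
  intro i hi
  refine hr i fun u => ?_
  by_cases huv : u = v
  · simp [huv, hv]
  · simpa [Finsupp.single_eq_of_ne huv] using hi u

theorem X_mul_standardProduct {v : σ} (hv : ∀ i, m i v = 0)
    (x : (ι →₀ ℕ) × standardExponents m) :
    X v * standardProduct F x =
      standardProduct F (x.1, ⟨x.2.1 + Finsupp.single v 1,
        add_single_mem_standardExponents hv x.2.2⟩) := by
  have hmonomial : (monomial (x.2.1 + Finsupp.single v 1) 1 : MvPolynomial σ R) =
      monomial x.2.1 1 * X v := by
    rw [X, monomial_mul, one_mul]
  rw [standardProduct, standardProduct, hmonomial]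
  ring

namespace HasCoprimeLeadingTerms

variable [IsOrderedCancelAddMonoid M]

theorem hasLeadingTerm_standardProduct (h : HasCoprimeLeadingTerms w F m)
    (x : (ι →₀ ℕ) × standardExponents m) :
    HasLeadingTerm w (standardProduct F x) (recompose m x) :=
  (HasLeadingTerm.finsuppProd h.hasLeadingTerm x.1).mul (.monomial_one _)

/-- The products of powers of the `F i` with standard monomials form a basis, which makes the
polynomial ring a free module over its subring generated by the `F i`. -/
noncomputable def standardBasis (h : HasCoprimeLeadingTerms w F m) :
    Module.Basis ((ι →₀ ℕ) × standardExponents m) R (MvPolynomial σ R) :=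
  .mk (HasLeadingTerm.linearIndependent h.hasLeadingTerm_standardProduct
      (recompose_injective h.disjoint))
    (HasLeadingTerm.top_le_span_range h.wellFounded h.hasLeadingTerm_standardProduct
      (recompose_surjective h.ne_zero))

theorem standardBasis_apply (h : HasCoprimeLeadingTerms w F m)
    (x : (ι →₀ ℕ) × standardExponents m) : h.standardBasis x = standardProduct F x :=
  Module.Basis.mk_apply _ _ x

theorem standardBasis_coord_mul_eq_zero (h : HasCoprimeLeadingTerms w F m)
    (i : ι) (g : MvPolynomial σ R) (r : standardExponents m) :
    h.standardBasis.coord (0, r) (F i * g) = 0 := by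
  suffices h.standardBasis.coord (0, r) ∘ₗ LinearMap.mulLeft R (F i) = 0 from
    LinearMap.congr_fun this g
  refine h.standardBasis.ext fun ⟨n, s⟩ => ?_
  have hne : (n + Finsupp.single i 1, s) ≠ (0, r) := fun heq => by
    simpa using DFunLike.congr_fun (congrArg Prod.fst heq) i
  rw [LinearMap.comp_apply, LinearMap.mulLeft_apply, standardBasis_apply,
    ← standardProduct_add_single, ← h.standardBasis_apply, Module.Basis.coord_apply,
    Module.Basis.repr_self, Finsupp.single_eq_of_ne' hne, LinearMap.zero_apply]

theorem mem_span_iff_standardBasis_coord (h : HasCoprimeLeadingTerms w F m)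
    {g : MvPolynomial σ R} :
    g ∈ Ideal.span (Set.range F) ↔ ∀ r, h.standardBasis.coord (0, r) g = 0 := by
  constructor
  · intro hg r
    obtain ⟨c, rfl⟩ := Finsupp.mem_ideal_span_range_iff_exists_finsupp.1 hg
    rw [Finsupp.sum, map_sum]
    exact Finset.sum_eq_zero fun i _ => by
      rw [mul_comm, h.standardBasis_coord_mul_eq_zero]
  · intro hg
    rw [← h.standardBasis.linearCombination_repr g, Finsupp.linearCombination_apply]
    refine sum_mem fun x hx => Submodule.smul_of_tower_mem _ _ ?_
    rw [standardBasis_apply]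
    refine standardProduct_mem_span fun hx0 => Finsupp.mem_support_iff.1 hx ?_
    rw [← Module.Basis.coord_apply, ← Prod.mk.eta (p := x), hx0, hg]

theorem standardBasis_coord_X_mul (h : HasCoprimeLeadingTerms w F m) {v : σ}
    (hv : ∀ i, m i v = 0) (g : MvPolynomial σ R) (r : standardExponents m) :
    h.standardBasis.coord
        (0, ⟨r.1 + Finsupp.single v 1, add_single_mem_standardExponents hv r.2⟩) (X v * g) =
      h.standardBasis.coord (0, r) g := by
  classical
  suffices h.standardBasis.coord _ ∘ₗ LinearMap.mulLeft R (X v) = h.standardBasis.coord (0, r) from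
    LinearMap.congr_fun this g
  refine h.standardBasis.ext fun ⟨n, s⟩ => ?_
  rw [LinearMap.comp_apply, LinearMap.mulLeft_apply, standardBasis_apply,
    X_mul_standardProduct hv, ← h.standardBasis_apply, ← h.standardBasis_apply]
  simp only [Module.Basis.coord_apply, Module.Basis.repr_self, Finsupp.single_apply,
    Prod.mk.injEq, Subtype.ext_iff, add_left_inj]

theorem mem_span_of_X_mul_mem (h : HasCoprimeLeadingTerms w F m) {v : σ} (hv : ∀ i, m i v = 0)
    {g : MvPolynomial σ R} (hg : X v * g ∈ Ideal.span (Set.range F)) :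
    g ∈ Ideal.span (Set.range F) := by
  rw [h.mem_span_iff_standardBasis_coord] at hg ⊢
  exact fun r => (h.standardBasis_coord_X_mul hv g r).symm.trans (hg _)

end HasCoprimeLeadingTerms

end CoprimeLeadingTerms

section QuadraticWeight

variable {σ : Type*} (ℓ : σ → ℕ)

/-- Compares exponents first by total level `∑ ℓ`, and for equal total level ranks those with
*smaller* `∑ ℓ ^ 2` higher, so that among the products of two variables of fixed total level the
balanced ones lead. -/
noncomputable def balancedWeight : (σ →₀ ℕ) →+ ℕ ×ₗ ℤ :=
  Finsupp.weight fun v => toLex (ℓ v, -(ℓ v : ℤ) ^ 2)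

theorem neg_snd_balancedWeight_le (p : σ →₀ ℕ) :
    -(ofLex (balancedWeight ℓ p)).2 ≤ ((ofLex (balancedWeight ℓ p)).1 : ℤ) ^ 2 := by
  induction p using Finsupp.induction_linear with
  | zero => simp
  | add p q hp hq =>
    simp only [map_add, ofLex_add, Prod.fst_add, Prod.snd_add, Nat.cast_add]
    have hcross : 0 ≤ ((ofLex (balancedWeight ℓ p)).1 : ℤ) * (ofLex (balancedWeight ℓ q)).1 := by
      positivity
    linarith
  | single v n =>
    have hn : (n : ℤ) ≤ n ^ 2 := by exact_mod_cast Nat.le_self_pow two_ne_zero n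
    rw [balancedWeight, Finsupp.weight_single]
    change -(n • -(ℓ v : ℤ) ^ 2) ≤ ((n • ℓ v : ℕ) : ℤ) ^ 2
    simp only [nsmul_eq_mul, smul_eq_mul, Nat.cast_mul, mul_pow]
    nlinarith [sq_nonneg (ℓ v : ℤ)]

theorem wellFounded_balancedWeight :
    WellFounded fun p q => balancedWeight ℓ p < balancedWeight ℓ q := by
  let rank (p : σ →₀ ℕ) : ℕ ×ₗ ℕ :=
    toLex ((ofLex (balancedWeight ℓ p)).1,
      ((ofLex (balancedWeight ℓ p)).1 ^ 2 + (ofLex (balancedWeight ℓ p)).2 : ℤ).toNat)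
  refine Subrelation.wf (fun {p q} hpq => ?_) (InvImage.wf rank wellFounded_lt)
  obtain hfst | ⟨hfst, hsnd⟩ := Prod.Lex.lt_iff.1 hpq
  · exact Prod.Lex.toLex_lt_toLex.2 (.inl hfst)
  · refine Prod.Lex.toLex_lt_toLex.2 (.inr ⟨hfst, ?_⟩)
    have hp := neg_snd_balancedWeight_le ℓ p
    rw [hfst] at hp ⊢
    omega

variable {ℓ}

theorem balancedWeight_pair_lt {x y x' y' : σ} {n : ℕ} (hx' : ℓ x' = n) (hy' : ℓ y' = n)
    (hsum : ℓ x + ℓ y = 2 * n) (hne : ℓ x ≠ ℓ y) :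
    balancedWeight ℓ (Finsupp.single x 1 + Finsupp.single y 1) <
      balancedWeight ℓ (Finsupp.single x' 1 + Finsupp.single y' 1) := by
  simp only [balancedWeight, map_add, Finsupp.weight_single, one_smul, hx', hy', ← toLex_add,
    Prod.mk_add_mk]
  refine Prod.Lex.toLex_lt_toLex.2 (.inr ⟨by simpa [two_mul] using hsum, ?_⟩)
  have hsum' : (ℓ x : ℤ) + ℓ y = 2 * n := by exact_mod_cast hsum
  have hsub : (ℓ x : ℤ) - ℓ y ≠ 0 := sub_ne_zero.2 (by exact_mod_cast hne)
  have hpos : 0 < ((ℓ x : ℤ) - ℓ y) ^ 2 := by positivity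
  dsimp only
  nlinarith [hsum', hpos]

end QuadraticWeight

section LeibnizDet

open Finset.HasAntidiagonal (antidiagonal mem_antidiagonal)

variable {A B : Type*} [CommRing A] [CommRing B]

/-- The `n`-th derivative of a product as given by the Leibniz rule, where `f i` and `g i` stand for
the `i`-th derivatives of the factors. -/
def leibnizProduct (f g : ℕ → A) (n : ℕ) : A :=
  ∑ ij ∈ antidiagonal n, n.choose ij.1 • (f ij.1 * g ij.2)

/-- The `n`-th derivative of `a * d - b * c` as given by the Leibniz rule, where `a i`, `b i`, `c i`
and `d i` stand for the `i`-th derivatives of the four entries. -/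
def leibnizDet (a b c d : ℕ → A) (n : ℕ) : A :=
  leibnizProduct a d n - leibnizProduct b c n

theorem iterate_mul_of_leibniz {D : A → A} (hadd : ∀ f g, D (f + g) = D f + D g)
    (hmul : ∀ f g, D (f * g) = D f * g + f * D g) (f g : A) (n : ℕ) :
    D^[n] (f * g) = leibnizProduct (D^[·] f) (D^[·] g) n := by
  let E : A →+ A := AddMonoidHom.mk' D hadd
  induction n with
  | zero => simp [leibnizProduct]
  | succ n ih =>
    rw [leibnizProduct, Finset.sum_antidiagonal_choose_succ_nsmul (fun i j => D^[i] f * D^[j] g) n,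
      Function.iterate_succ_apply', ih, ← Finset.sum_add_distrib]
    refine (map_sum E _ _).trans (Finset.sum_congr rfl fun ij hij => ?_)
    rw [map_nsmul, Nat.choose_symm_of_eq_add (mem_antidiagonal.1 hij).symm, ← smul_add,
      Function.iterate_succ_apply', Function.iterate_succ_apply', add_comm]
    exact congrArg _ (hmul _ _)

theorem iterate_det_of_leibniz {D : A → A} (hadd : ∀ f g, D (f + g) = D f + D g)
    (hmul : ∀ f g, D (f * g) = D f * g + f * D g) (a b c d : A) (n : ℕ) :
    D^[n] (a * d - b * c) = leibnizDet (D^[·] a) (D^[·] b) (D^[·] c) (D^[·] d) n := by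
  have hsub : D^[n] (a * d - b * c) = D^[n] (a * d) - D^[n] (b * c) :=
    Function.Semiconj₂.iterate (fun f g => map_sub (AddMonoidHom.mk' D hadd) f g) n _ _
  rw [hsub, iterate_mul_of_leibniz hadd hmul, iterate_mul_of_leibniz hadd hmul, leibnizDet]

theorem map_leibnizDet {F : Type*} [FunLike F A B] [RingHomClass F A B] (φ : F) (a b c d : ℕ → A)
    (n : ℕ) :
    φ (leibnizDet a b c d n) = leibnizDet (φ ∘ a) (φ ∘ b) (φ ∘ c) (φ ∘ d) n := by
  simp only [leibnizDet, leibnizProduct, map_sum, map_nsmul, map_sub, map_mul,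
    Function.comp_apply]

/-- The part of `leibnizDet a b c d (n + 1)` that involves only `d 0, …, d n`. -/
def leibnizDetTail (a b c d : ℕ → A) (n : ℕ) : A :=
  ∑ i : Fin (n + 1), (n + 1).choose (i + 1) • (a (i + 1) * d (n - i)) - leibnizProduct b c (n + 1)

theorem leibnizDet_succ (a b c d : ℕ → A) (n : ℕ) :
    leibnizDet a b c d (n + 1) = a 0 * d (n + 1) + leibnizDetTail a b c d n := by
  rw [leibnizDet, leibnizDetTail, leibnizProduct,
    Finset.Nat.sum_antidiagonal_succ (f := fun ij => (n + 1).choose ij.1 • (a ij.1 * d ij.2)),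
    Finset.Nat.sum_antidiagonal_eq_sum_range_succ_mk, Finset.sum_range, Nat.choose_zero_right,
    one_smul, add_sub_assoc]

theorem leibnizDetTail_congr (a b c : ℕ → A) {d d' : ℕ → A} {n : ℕ}
    (h : ∀ i ≤ n, d i = d' i) : leibnizDetTail a b c d n = leibnizDetTail a b c d' n := by
  simp only [leibnizDetTail, h _ (Nat.sub_le n _)]

theorem eq_of_leibnizDet_succ_eq_zero {a b c d d' : ℕ → A} (ha : IsUnit (a 0)) (h0 : d 0 = d' 0)
    (hd : ∀ n, leibnizDet a b c d (n + 1) = 0) (hd' : ∀ n, leibnizDet a b c d' (n + 1) = 0) :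
    d = d' := by
  funext n
  induction n using Nat.strong_induction_on with
  | _ n ih =>
  obtain _ | n := n
  · exact h0
  · have htail := leibnizDetTail_congr a b c fun i hi => ih i (Nat.lt_succ_of_le hi)
    have heq := (hd n).trans (hd' n).symm
    rw [leibnizDet_succ, leibnizDet_succ, htail, add_left_inj] at heq
    exact ha.mul_left_cancel heq

/-- Solves `leibnizDet a b c d (n + 1) = 0` recursively for `d (n + 1)`, starting from
`d 0 = d₀`; here `ainv` stands for the inverse of `a 0`. The sum is that of `leibnizDetTail`,
spelled out so that each recursive call is visibly made at a smaller index. -/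
def leibnizSolution (a b c : ℕ → A) (ainv d₀ : A) : ℕ → A
  | 0 => d₀
  | n + 1 => -(ainv *
      (∑ i : Fin (n + 1), (n + 1).choose (i + 1) •
          (a (i + 1) * leibnizSolution a b c ainv d₀ (n - i)) - leibnizProduct b c (n + 1)))

theorem exists_leibnizDet_succ_eq_zero {a : ℕ → A} (ha : IsUnit (a 0)) (b c : ℕ → A) (d₀ : A) :
    ∃ d : ℕ → A, d 0 = d₀ ∧ ∀ n, leibnizDet a b c d (n + 1) = 0 := by
  obtain ⟨u, hu⟩ := ha
  refine ⟨leibnizSolution a b c ↑u⁻¹ d₀, by rw [leibnizSolution], fun n => ?_⟩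
  rw [leibnizDet_succ, leibnizSolution, ← hu, mul_neg, Units.mul_inv_cancel_left, leibnizDetTail,
    neg_add_cancel]

end LeibnizDet

section LeibnizLeadingTerm

open Finset.HasAntidiagonal (antidiagonal mem_antidiagonal)

variable {σ R : Type*} [CommRing R] {ℓ : σ → ℕ} {x y : ℕ → σ} {s t : ℕ}

theorem nsmul_X_mul_X (n : ℕ) (u v : σ) :
    n • (X u * X v : MvPolynomial σ R) =
      monomial (Finsupp.single u 1 + Finsupp.single v 1) (n : R) := by
  rw [X, X, monomial_mul, one_mul, ← map_nsmul, nsmul_one]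

theorem balancedWeight_leibniz_pair_lt (hx : ∀ i, ℓ (x i) = 2 * i + s)
    (hy : ∀ j, ℓ (y j) = 2 * j + t) (hst : s + t = 2) {i j n : ℕ} (hij : i + j = n)
    (hi : 2 * i + s ≠ n + 1) {u v : σ} (hu : ℓ u = n + 1) (hv : ℓ v = n + 1) :
    balancedWeight ℓ (Finsupp.single (x i) 1 + Finsupp.single (y j) 1) <
      balancedWeight ℓ (Finsupp.single u 1 + Finsupp.single v 1) :=
  balancedWeight_pair_lt hu hv (by rw [hx, hy]; omega) (by rw [hx, hy]; omega)

theorem leibnizProduct_X_mem_restrictSupport (hx : ∀ i, ℓ (x i) = 2 * i + s)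
    (hy : ∀ j, ℓ (y j) = 2 * j + t) (hst : s + t = 2) {n : ℕ} (hn : ∀ i, 2 * i + s ≠ n + 1)
    {u v : σ} (hu : ℓ u = n + 1) (hv : ℓ v = n + 1) :
    leibnizProduct (fun i => X (x i)) (fun j => X (y j)) n ∈ restrictSupport R
      {q | balancedWeight ℓ q <
        balancedWeight ℓ (Finsupp.single u 1 + Finsupp.single v 1)} := by
  refine sum_mem fun ij hij => ?_
  rw [nsmul_X_mul_X]
  exact (monomial_mem_restrictSupport R).2
    (.inl (balancedWeight_leibniz_pair_lt hx hy hst (mem_antidiagonal.1 hij) (hn _) hu hv))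

theorem hasLeadingTerm_leibnizProduct_X (hx : ∀ i, ℓ (x i) = 2 * i + s)
    (hy : ∀ j, ℓ (y j) = 2 * j + t) (hst : s + t = 2) {i j n : ℕ} (hij : i + j = n)
    (hi : 2 * i + s = n + 1) (hunit : IsUnit (n.choose i : R)) :
    HasLeadingTerm (balancedWeight ℓ)
      (leibnizProduct (fun i => X (x i)) (fun j => X (y j)) n : MvPolynomial σ R)
      (Finsupp.single (x i) 1 + Finsupp.single (y j) 1) := by
  refine ⟨hunit.unit, ?_⟩
  rw [IsUnit.unit_spec, ← nsmul_X_mul_X, leibnizProduct,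
    ← Finset.add_sum_erase _ _ (mem_antidiagonal (a := (i, j)) |>.2 hij),
    add_sub_cancel_left]
  refine sum_mem fun ij hij' => ?_
  obtain ⟨hne, hmem⟩ := Finset.mem_erase.1 hij'
  have hsum := mem_antidiagonal.1 hmem
  have hne_mid : 2 * ij.1 + s ≠ n + 1 := fun h => hne (Prod.ext (by omega) (by omega))
  rw [nsmul_X_mul_X]
  exact (monomial_mem_restrictSupport R).2 (.inl (balancedWeight_leibniz_pair_lt hx hy hst hsum
    hne_mid (by rw [hx]; omega) (by rw [hy]; omega)))

end LeibnizLeadingTerm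

section DetJet

variable (R : Type) [CommRing R]

/-- The derivatives of the matrix entry `c_{ij}`, as variables of the differential polynomial
ring. -/
noncomputable def jet (i j : Fin 2) (n : ℕ) : DiffPolyC R :=
  X ((i, j), n)

/-- The `n`-th derivative of `det`. -/
noncomputable def detJet (n : ℕ) : DiffPolyC R :=
  leibnizDet (jet R 0 0) (jet R 0 1) (jet R 1 0) (jet R 1 1) n

/-- The level of a variable, chosen so that every term of `detJet R n` is a product of two variables
whose levels add up to `2 * n + 2`, exactly one of the terms having both levels equal to `n + 1`. -/
def level (v : DVar) : ℕ :=
  2 * v.2 + !![1, 2; 0, 1] v.1.1 v.1.2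

theorem exists_hasLeadingTerm_detJet {n : ℕ} (hunit : IsUnit (n.choose (n / 2) : R)) :
    ∃ u v : DVar, level u = n + 1 ∧ level v = n + 1 ∧
      HasLeadingTerm (balancedWeight level) (detJet R n)
        (Finsupp.single u 1 + Finsupp.single v 1) := by
  have h₀₀ (i : ℕ) : level ((0, 0), i) = 2 * i + 1 := rfl
  have h₀₁ (i : ℕ) : level ((0, 1), i) = 2 * i + 2 := rfl
  have h₁₀ (i : ℕ) : level ((1, 0), i) = 2 * i + 0 := rfl
  have h₁₁ (i : ℕ) : level ((1, 1), i) = 2 * i + 1 := rfl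
  have hmid : n / 2 + (n - n / 2) = n := by omega
  obtain ⟨k, hn | hn⟩ := n.even_or_odd'
  · refine ⟨((0, 0), n / 2), ((1, 1), n - n / 2), by rw [h₀₀]; omega, by rw [h₁₁]; omega, ?_⟩
    exact (hasLeadingTerm_leibnizProduct_X h₀₀ h₁₁ rfl hmid (by omega) hunit).sub_of_mem
      (leibnizProduct_X_mem_restrictSupport h₀₁ h₁₀ rfl (by omega) (by rw [h₀₀]; omega)
        (by rw [h₁₁]; omega))
  · refine ⟨((0, 1), n / 2), ((1, 0), n - n / 2), by rw [h₀₁]; omega, by rw [h₁₀]; omega, ?_⟩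
    rw [detJet, leibnizDet, ← neg_sub]
    exact ((hasLeadingTerm_leibnizProduct_X h₀₁ h₁₀ rfl hmid (by omega) hunit).sub_of_mem
      (leibnizProduct_X_mem_restrictSupport h₀₀ h₁₁ rfl (by omega) (by rw [h₀₁]; omega)
        (by rw [h₁₀]; omega))).neg

theorem exists_hasCoprimeLeadingTerms_detJet
    (hunit : ∀ n : ℕ, IsUnit (n.choose (n / 2) : R)) :
    ∃ m : ℕ → DVar →₀ ℕ,
      HasCoprimeLeadingTerms (balancedWeight level) (fun n => detJet R (n + 1)) m ∧
        ∀ n, m n ((0, 0), 0) = 0 := by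
  choose u v hu hv hlead using fun n => exists_hasLeadingTerm_detJet R (hunit (n + 1))
  let m (n : ℕ) : DVar →₀ ℕ := Finsupp.single (u n) 1 + Finsupp.single (v n) 1
  have hlevel {n : ℕ} {z : DVar} (hz : m n z ≠ 0) : level z = n + 2 := by
    contrapose! hz
    have hzu : z ≠ u n := fun h => hz (h ▸ hu n)
    have hzv : z ≠ v n := fun h => hz (h ▸ hv n)
    rw [Finsupp.add_apply, Finsupp.single_eq_of_ne hzu, Finsupp.single_eq_of_ne hzv,
      add_zero]
  refine ⟨m, ⟨wellFounded_balancedWeight level, hlead, fun n => ?_, fun i j hij => ?_⟩, fun n => ?_⟩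
  · simp [m]
  · refine Finsupp.disjoint_iff.2 (Finset.disjoint_left.2 fun z hi hj => hij ?_)
    have hzi := hlevel (Finsupp.mem_support_iff.1 hi)
    have hzj := hlevel (Finsupp.mem_support_iff.1 hj)
    omega
  · by_contra hne
    have hone : level ((0, 0), 0) = 1 := rfl
    have hn := hlevel hne
    omega

theorem mem_span_detJet_of_X_mul_mem (hunit : ∀ n : ℕ, IsUnit (n.choose (n / 2) : R))
    {g : DiffPolyC R}
    (hg : X ((0, 0), 0) * g ∈ Ideal.span (Set.range fun n => detJet R (n + 1))) :
    g ∈ Ideal.span (Set.range fun n => detJet R (n + 1)) := by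
  obtain ⟨m, hm, hv⟩ := exists_hasCoprimeLeadingTerms_detJet R hunit
  exact hm.mem_span_of_X_mul_mem hv hg

end DetJet

section Primality

theorem isPrime_of_localization {A B : Type*} [CommRing A] [CommRing B] [IsDomain B] {I : Ideal A}
    {a : A} (ha : ∀ g, a * g ∈ I → g ∈ I) {φ : A →+* B} (hφ : I ≤ RingHom.ker φ)
    {θ : B →+* Localization.Away (Ideal.Quotient.mk I a)}
    (hθ : θ.comp φ = (algebraMap (A ⧸ I) _).comp (Ideal.Quotient.mk I)) : I.IsPrime := by
  have hreg : Submonoid.powers (Ideal.Quotient.mk I a) ≤ nonZeroDivisors (A ⧸ I) := by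
    refine Submonoid.powers_le.2 (mem_nonZeroDivisors_iff_left.2 fun q hq => ?_)
    obtain ⟨g, rfl⟩ := Ideal.Quotient.mk_surjective q
    rw [← map_mul, Ideal.Quotient.eq_zero_iff_mem] at hq
    exact Ideal.Quotient.eq_zero_iff_mem.2 (ha g hq)
  have hinj := IsLocalization.injective (Localization.Away (Ideal.Quotient.mk I a)) hreg
  have hker : RingHom.ker φ ≤ I := by
    intro g hg
    have hg' : algebraMap (A ⧸ I) (Localization.Away (Ideal.Quotient.mk I a))
        (Ideal.Quotient.mk I g) = 0 := by
      rw [← RingHom.comp_apply, ← hθ, RingHom.comp_apply, RingHom.mem_ker.1 hg, map_zero]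
    exact Ideal.Quotient.eq_zero_iff_mem.1 (hinj (hg'.trans (map_zero _).symm))
  rw [le_antisymm hφ hker]
  exact RingHom.ker_isPrime φ

variable {R : Type} [CommRing R] {B : Type*} [CommRing B] [Algebra R B]

theorem exists_algHom_detJet_eq_zero (ψ : DiffPolyC R →ₐ[R] B) (hψ : IsUnit (ψ (jet R 0 0 0))) :
    ∃ φ : DiffPolyC R →ₐ[R] B, (∀ n, φ (detJet R (n + 1)) = 0) ∧
      ∀ v : DVar, (v.1 = (1, 1) → v.2 = 0) → φ (X v) = ψ (X v) := by
  obtain ⟨d, hd₀, hd⟩ := exists_leibnizDet_succ_eq_zero (a := ψ ∘ jet R 0 0) hψ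
    (ψ ∘ jet R 0 1) (ψ ∘ jet R 1 0) (ψ (jet R 1 1 0))
  let φ : DiffPolyC R →ₐ[R] B := aeval fun v => if v.1 = (1, 1) then d v.2 else ψ (X v)
  have hφ (v : DVar) : φ (X v) = if v.1 = (1, 1) then d v.2 else ψ (X v) := aeval_X _ v
  refine ⟨φ, fun n => ?_, fun v hv => ?_⟩
  · have hjet (i j : Fin 2) (hij : (i, j) ≠ (1, 1)) : φ ∘ jet R i j = ψ ∘ jet R i j :=
      funext fun n => (hφ _).trans (if_neg hij)
    have hjet₁₁ : φ ∘ jet R 1 1 = d := funext fun n => (hφ _).trans (if_pos rfl)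
    rw [detJet, map_leibnizDet, hjet 0 0 (by decide), hjet 0 1 (by decide), hjet 1 0 (by decide),
      hjet₁₁]
    exact hd n
  · obtain ⟨ij, n⟩ := v
    rw [hφ]
    split_ifs with hij
    · obtain rfl : n = 0 := hv hij
      obtain rfl : ij = (1, 1) := hij
      exact hd₀
    · rfl

theorem algHom_ext_of_detJet_eq_zero {φ ψ : DiffPolyC R →ₐ[R] B}
    (hφ : ∀ n, φ (detJet R (n + 1)) = 0) (hψ : ∀ n, ψ (detJet R (n + 1)) = 0)
    (hunit : IsUnit (ψ (jet R 0 0 0)))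
    (heq : ∀ v : DVar, (v.1 = (1, 1) → v.2 = 0) → φ (X v) = ψ (X v)) : φ = ψ := by
  have hjet (i j : Fin 2) (hij : (i, j) ≠ (1, 1)) : φ ∘ jet R i j = ψ ∘ jet R i j :=
    funext fun n => heq _ fun h => absurd h hij
  have hjet₁₁ : φ ∘ jet R 1 1 = ψ ∘ jet R 1 1 := by
    refine eq_of_leibnizDet_succ_eq_zero (a := ψ ∘ jet R 0 0) (b := ψ ∘ jet R 0 1)
      (c := ψ ∘ jet R 1 0) hunit (heq _ fun _ => rfl) (fun n => ?_) fun n => ?_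
    · rw [← hjet 0 0 (by decide), ← hjet 0 1 (by decide), ← hjet 1 0 (by decide)]
      exact (map_leibnizDet φ _ _ _ _ _).symm.trans (hφ n)
    · exact (map_leibnizDet ψ _ _ _ _ _).symm.trans (hψ n)
  refine algHom_ext fun ⟨⟨i, j⟩, n⟩ => ?_
  by_cases hij : (i, j) = (1, 1)
  · cases hij
    exact congrFun hjet₁₁ n
  · exact congrFun (hjet i j hij) n

theorem isPrime_span_detJet [IsDomain R] (hunit : ∀ n : ℕ, IsUnit (n.choose (n / 2) : R)) :
    (Ideal.span (Set.range fun n => detJet R (n + 1))).IsPrime := by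
  set I := Ideal.span (Set.range fun n => detJet R (n + 1))
  let a : DiffPolyC R := jet R 0 0 0
  let Q := Localization.Away (Ideal.Quotient.mk I a)
  have : IsDomain (Localization.Away a) := IsLocalization.Away.isDomain _ (x := a) (X_ne_zero _)
  let ι : DiffPolyC R →ₐ[R] Localization.Away a := IsScalarTower.toAlgHom R _ _
  let π : DiffPolyC R →ₐ[R] Q := (IsScalarTower.toAlgHom R _ Q).comp (Ideal.Quotient.mkₐ R I)
  have hπ : IsUnit (π a) := IsLocalization.Away.algebraMap_isUnit (Ideal.Quotient.mk I a)
  have hπI (n : ℕ) : π (detJet R (n + 1)) = 0 := by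
    have hmem : Ideal.Quotient.mk I (detJet R (n + 1)) = 0 :=
      Ideal.Quotient.eq_zero_iff_mem.2 (Ideal.subset_span ⟨n, rfl⟩)
    exact (congrArg (algebraMap _ Q) hmem).trans (map_zero _)
  let θ : Localization.Away a →ₐ[R] Q := IsLocalization.Away.liftAlgHom a hπ
  obtain ⟨φ, hφ, hφι⟩ :=
    exists_algHom_detJet_eq_zero ι (IsLocalization.Away.algebraMap_isUnit a)
  have hφI : I ≤ RingHom.ker (φ : DiffPolyC R →+* Localization.Away a) :=
    Ideal.span_le.2 (Set.range_subset_iff.2 hφ)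
  have hθφ : θ.comp φ = π := by
    refine algHom_ext_of_detJet_eq_zero (fun n => ?_) hπI hπ fun v hv => ?_
    · rw [AlgHom.comp_apply, hφ, map_zero]
    · rw [AlgHom.comp_apply, hφι v hv]
      exact IsLocalization.Away.lift_eq a hπ (X v)
  exact isPrime_of_localization (fun _ => mem_span_detJet_of_X_mul_mem R hunit) hφI
    (congrArg AlgHom.toRingHom hθφ)

end Primality

section DifferentialStructure

variable {R : Type} [CommRing R] {δ : R → R} {D : DiffPolyC R → DiffPolyC R}

theorem iterate_X_of_isDiffStructure (hD : IsDiffStructure δ D) (i j : Fin 2) :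
    (D^[·] (X ((i, j), 0))) = jet R i j := by
  obtain ⟨-, -, -, -, -, hX⟩ := hD
  funext n
  induction n with
  | zero => rfl
  | succ n ih => exact (Function.iterate_succ_apply' D n _).trans ((congrArg D ih).trans (hX _))

theorem iterate_detC (hD : IsDiffStructure δ D) (n : ℕ) : D^[n] (detC R) = detJet R n := by
  have ⟨_, _, hadd, hmul, _, _⟩ := hD
  rw [detC, iterate_det_of_leibniz hadd hmul, iterate_X_of_isDiffStructure hD,
    iterate_X_of_isDiffStructure hD, iterate_X_of_isDiffStructure hD,
    iterate_X_of_isDiffStructure hD, detJet]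

end DifferentialStructure

end JetDet

theorem detPrime_isPrime_general {K : Type} [CommRing K] [IsDomain K] [Algebra ℚ K]
    (δ : K → K) (D : DiffPolyC K → DiffPolyC K) (hD : IsDiffStructure δ D) :
    (Ideal.span {g : DiffPolyC K | ∃ i : ℕ, 1 ≤ i ∧ g = D^[i] (detC K)}).IsPrime := by
  have hunit (n : ℕ) : IsUnit (n.choose (n / 2) : K) := by
    have hchoose : (n.choose (n / 2) : ℚ) ≠ 0 := by
      exact_mod_cast (Nat.choose_pos (Nat.div_le_self n 2)).ne'
    simpa using hchoose.isUnit.map (algebraMap ℚ K)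
  have hgen : {g : DiffPolyC K | ∃ i : ℕ, 1 ≤ i ∧ g = D^[i] (detC K)} =
      Set.range fun n => JetDet.detJet K (n + 1) := by
    ext g
    constructor
    · rintro ⟨n, hn, rfl⟩
      obtain ⟨k, rfl⟩ := Nat.exists_eq_add_of_le' hn
      exact ⟨k, (JetDet.iterate_detC hD (k + 1)).symm⟩
    · rintro ⟨n, rfl⟩
      exact ⟨n + 1, n.succ_pos, (JetDet.iterate_detC hD (n + 1)).symm⟩
  rw [hgen]
  exact JetDet.isPrime_span_detJet hunit

/-- The differential ideal `[det']`, i.e. the ideal of `C` generated by the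
elements `det^{(i)}` for all `i ≥ 1`, is prime. -/
theorem detPrime_isPrime {K : Type} [Field K] [CharZero K]
    (δ : K → K) (D : DiffPolyC K → DiffPolyC K)
    (hD : IsDiffStructure δ D) :
    (Ideal.span {g : DiffPolyC K | ∃ i : ℕ, 1 ≤ i ∧ g = D^[i] (detC K)}).IsPrime :=
  detPrime_isPrime_general δ D hD
end

section
/- The differential ideal [det'] of C is saturated with respect to c11: for every f ∈ C, if c11^n · f ∈ [det'] for some integer n ≥ 0, then f ∈ [det']. In other words, [det'] = [det'] : c11^∞. -/
open MvPolynomial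

/-!
Give `c_{ij}^{(n)}` the weight `2 n + i + j`, with `i, j ∈ {0, 1}`. By the Leibniz rule every term
of `det^{(n)}` is a product of two variables whose weights add up to `2 n + 2`, and for `n ≥ 1`
exactly one of these products is balanced: the product of the two variables of weight `n + 1`. Its
coefficient is, up to sign, a binomial coefficient. Ordering monomials of equal weight by the sum of
the squared weights of their variables makes it the leading monomial of `det^{(n)}`.

These leading monomials are pairwise coprime. Hence, with `g_n = det^{(n)}`, the products
`X ^ s * ∏ g_n ^ e_n`, where `X ^ s` is not divisible by any leading monomial, form a basis of the
polynomial ring, and `[det']` is spanned by those with `e ≠ 0`. The variable `c₁₁` has weight `0`,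
so it divides no leading monomial; multiplication by it only shifts `s`, and thus it is injective
modulo this ideal.
-/

section LeadingExponent

variable {σ R : Type*} [CommRing R]

/-- A strict order on exponents of monomials that is well-founded and invariant under translation,
hence suitable for reduction. Unlike `MonomialOrder` it is not assumed to be linear. -/
class IsReductionOrder (r : (σ →₀ ℕ) → (σ →₀ ℕ) → Prop) : Prop
    extends IsWellFounded (σ →₀ ℕ) r, IsTrans (σ →₀ ℕ) r where
  add_right {a b : σ →₀ ℕ} (h : r a b) (c : σ →₀ ℕ) : r (a + c) (b + c)

/-- `m` is the leading exponent of `f` with respect to `r`, and the leading coefficient is a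
unit. -/
structure HasLeadingExponent (r : (σ →₀ ℕ) → (σ →₀ ℕ) → Prop) (f : MvPolynomial σ R)
    (m : σ →₀ ℕ) : Prop where
  isUnit_coeff : IsUnit (f.coeff m)
  eq_or_rel {t : σ →₀ ℕ} (ht : f.coeff t ≠ 0) : t = m ∨ r t m

variable {r : (σ →₀ ℕ) → (σ →₀ ℕ) → Prop}

theorem hasLeadingExponent_monomial (m : σ →₀ ℕ) {c : R} (hc : IsUnit c) :
    HasLeadingExponent r (monomial m c) m where
  isUnit_coeff := by
    classical
    rwa [coeff_monomial, if_pos rfl]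
  eq_or_rel ht := by
    classical
    rw [coeff_monomial] at ht
    exact .inl (of_not_not fun h => ht (if_neg (Ne.symm h)))

variable [IsReductionOrder r]

theorem IsReductionOrder.add_left {a b : σ →₀ ℕ} (h : r a b) (c : σ →₀ ℕ) :
    r (c + a) (c + b) := by
  simpa only [add_comm c] using add_right h c

theorem IsReductionOrder.eq_and_eq_or_rel_add {a b m n : σ →₀ ℕ} (ha : a = m ∨ r a m)
    (hb : b = n ∨ r b n) : (a = m ∧ b = n) ∨ r (a + b) (m + n) := by
  rcases ha with rfl | ha
  · exact hb.imp (⟨rfl, ·⟩) (add_left · a)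
  · rcases hb with rfl | hb
    · exact .inr (add_right ha b)
    · exact .inr (_root_.trans (add_right ha b) (add_left hb m))

namespace HasLeadingExponent

variable {f g : MvPolynomial σ R} {m n : σ →₀ ℕ}

theorem coeff_mul (hf : HasLeadingExponent r f m) (hg : HasLeadingExponent r g n) :
    (f * g).coeff (m + n) = f.coeff m * g.coeff n := by
  classical
  rw [MvPolynomial.coeff_mul]
  refine Finset.sum_eq_single (m, n) (fun ⟨a, b⟩ hab hne => ?_) (by simp)
  by_contra hcoeff
  have hrel := IsReductionOrder.eq_and_eq_or_rel_add (hf.eq_or_rel (left_ne_zero_of_mul hcoeff))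
    (hg.eq_or_rel (right_ne_zero_of_mul hcoeff))
  rw [Finset.HasAntidiagonal.mem_antidiagonal.1 hab] at hrel
  exact hrel.elim (fun h => hne (Prod.ext h.1 h.2)) (irrefl _)

theorem mul (hf : HasLeadingExponent r f m) (hg : HasLeadingExponent r g n) :
    HasLeadingExponent r (f * g) (m + n) where
  isUnit_coeff := hf.coeff_mul hg ▸ hf.isUnit_coeff.mul hg.isUnit_coeff
  eq_or_rel {t} ht := by
    classical
    rw [MvPolynomial.coeff_mul] at ht
    obtain ⟨⟨a, b⟩, hab, hcoeff⟩ := Finset.exists_ne_zero_of_sum_ne_zero ht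
    obtain rfl := Finset.HasAntidiagonal.mem_antidiagonal.1 hab
    refine (IsReductionOrder.eq_and_eq_or_rel_add (hf.eq_or_rel (left_ne_zero_of_mul hcoeff))
      (hg.eq_or_rel (right_ne_zero_of_mul hcoeff))).imp_left ?_
    rintro ⟨rfl, rfl⟩
    rfl

theorem pow (hf : HasLeadingExponent r f m) (k : ℕ) : HasLeadingExponent r (f ^ k) (k • m) := by
  induction k with
  | zero => simpa using hasLeadingExponent_monomial (r := r) 0 (isUnit_one (M := R))
  | succ k ih => simpa only [pow_succ, succ_nsmul] using ih.mul hf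

theorem prod {ι : Type*} {f : ι → MvPolynomial σ R} {m : ι → σ →₀ ℕ} (s : Finset ι)
    (hf : ∀ i ∈ s, HasLeadingExponent r (f i) (m i)) :
    HasLeadingExponent r (∏ i ∈ s, f i) (∑ i ∈ s, m i) := by
  classical
  induction s using Finset.induction_on with
  | empty => simpa using hasLeadingExponent_monomial (r := r) 0 (isUnit_one (M := R))
  | insert i s hi ih =>
    rw [Finset.prod_insert hi, Finset.sum_insert hi]
    exact (hf i (s.mem_insert_self i)).mul (ih fun j hj => hf j (Finset.mem_insert_of_mem hj))

theorem sum {κ : Type*} {u : κ → MvPolynomial σ R} {s : Finset κ} {k : κ} (hk : k ∈ s)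
    (hlead : HasLeadingExponent r (u k) m)
    (hlower : ∀ j ∈ s, j ≠ k → ∀ t, (u j).coeff t ≠ 0 → r t m) :
    HasLeadingExponent r (∑ j ∈ s, u j) m where
  isUnit_coeff := by
    rw [coeff_sum, Finset.sum_eq_single_of_mem k hk fun j hj hjk =>
      of_not_not fun h => irrefl m (hlower j hj hjk m h)]
    exact hlead.isUnit_coeff
  eq_or_rel {t} ht := by
    rw [coeff_sum] at ht
    obtain ⟨j, hj, hcoeff⟩ := Finset.exists_ne_zero_of_sum_ne_zero ht
    by_cases hjk : j = k
    · exact hlead.eq_or_rel (hjk ▸ hcoeff)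
    · exact .inr (hlower j hj hjk t hcoeff)

variable {κ : Type*} {u : κ → MvPolynomial σ R} {w : κ → σ →₀ ℕ}

theorem linearIndependent (hu : ∀ k, HasLeadingExponent r (u k) (w k))
    (hw : Function.Injective w) : LinearIndependent R u := by
  rw [linearIndependent_iff']
  intro s c hc
  by_contra! ⟨k₀, hk₀, hck₀⟩
  have : IsStrictOrder κ (w ⁻¹'o Function.swap r) := {}
  have hwf := (s.finite_toSet.inter_of_left {k | c k ≠ 0}).wellFoundedOn
    (r := w ⁻¹'o Function.swap r)
  obtain ⟨⟨k, hks, hck⟩, -, hmax⟩ :=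
    (show WellFounded _ from hwf).has_min Set.univ ⟨⟨k₀, hk₀, hck₀⟩, trivial⟩
  have hcoeff : ∀ j ∈ s, j ≠ k → c j * (u j).coeff (w k) = 0 := by
    intro j hj hjk
    by_contra h
    refine ((hu j).eq_or_rel (right_ne_zero_of_mul h)).elim (fun h' => hjk (hw h').symm) ?_
    exact hmax ⟨j, hj, left_ne_zero_of_mul h⟩ trivial
  have hck_mul : c k * (u k).coeff (w k) = 0 := by
    have h := congrArg (coeff (w k)) hc
    simpa only [coeff_sum, coeff_smul, smul_eq_mul, coeff_zero,
      Finset.sum_eq_single_of_mem k hks hcoeff] using h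
  exact hck ((hu k).isUnit_coeff.mul_left_eq_zero.1 hck_mul)

theorem monomial_mem_span (hu : ∀ k, HasLeadingExponent r (u k) (w k))
    (hw : Function.Surjective w) (s : σ →₀ ℕ) (c : R) :
    monomial s c ∈ Submodule.span R (Set.range u) := by
  classical
  induction s using IsWellFounded.induction r generalizing c with
  | ind s ih =>
  obtain ⟨k, rfl⟩ := hw s
  obtain ⟨d, hd⟩ := (hu k).isUnit_coeff
  have htail : u k - monomial (w k) (d : R) ∈ Submodule.span R (Set.range u) := by
    rw [(u k - monomial (w k) (d : R)).as_sum]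
    refine Submodule.sum_mem _ fun t ht => ?_
    rw [mem_support_iff, coeff_sub, coeff_monomial] at ht
    split_ifs at ht with htw
    · simp [← htw, hd] at ht
    · rw [sub_zero] at ht
      exact ih t (((hu k).eq_or_rel ht).resolve_left (Ne.symm htw)) _
  have hlead : monomial (w k) (d : R) ∈ Submodule.span R (Set.range u) :=
    (Submodule.sub_mem_iff_right _ (Submodule.subset_span (Set.mem_range_self k))).1 htail
  simpa [smul_monomial] using Submodule.smul_mem _ (c * ↑d⁻¹) hlead

theorem span_range_eq_top (hu : ∀ k, HasLeadingExponent r (u k) (w k))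
    (hw : Function.Surjective w) : Submodule.span R (Set.range u) = ⊤ := by
  refine Submodule.eq_top_iff'.2 fun f => ?_
  rw [f.as_sum]
  exact Submodule.sum_mem _ fun s _ => monomial_mem_span hu hw s _

end HasLeadingExponent

end LeadingExponent

section CoprimeExponents

open scoped Function

variable {σ ι : Type*}

/-- The exponents of the standard monomials modulo the monomials with exponents `m i`. -/
abbrev StandardExponent (m : ι → σ →₀ ℕ) : Type _ := {n : σ →₀ ℕ // ∀ i, ¬ m i ≤ n}

/-- Translation of a standard exponent by an exponent coprime to all the `m i`, which is again
standard. -/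
noncomputable def StandardExponent.addRight {m : ι → σ →₀ ℕ} (n : StandardExponent m) (a : σ →₀ ℕ)
    (ha : ∀ i, Disjoint a.support (m i).support) : StandardExponent m :=
  ⟨n + a, fun i hi => n.2 i fun v => by
    by_cases hv : v ∈ (m i).support
    · have hav : a v = 0 := Finsupp.notMem_support_iff.1 (Finset.disjoint_right.1 (ha i) hv)
      simpa [hav] using hi v
    · simp [Finsupp.notMem_support_iff.1 hv]⟩

/-- The exponent of `X ^ n * ∏ i, (X ^ m i) ^ e i` for a pair `(e, n)`. -/
noncomputable def assembleExponent (m : ι → σ →₀ ℕ) (x : (ι →₀ ℕ) × StandardExponent m) :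
    σ →₀ ℕ :=
  x.2 + Finsupp.linearCombination ℕ m x.1

variable {m : ι → σ →₀ ℕ}

theorem StandardExponent.addRight_injective {a : σ →₀ ℕ}
    (ha : ∀ i, Disjoint a.support (m i).support) :
    Function.Injective fun n : StandardExponent m => n.addRight a ha :=
  fun _ _ h => Subtype.ext (add_right_cancel (congrArg Subtype.val h))

theorem linearCombination_apply_of_mem_support
    (hm : Pairwise (Disjoint on fun i => (m i).support)) (e : ι →₀ ℕ) {i : ι} {v : σ}
    (hv : v ∈ (m i).support) : Finsupp.linearCombination ℕ m e v = e i * m i v := by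
  rw [Finsupp.linearCombination_apply, Finsupp.sum_apply, Finsupp.sum_eq_single i]
  · simp
  · intro j _ hji
    have hvj : v ∉ (m j).support := Finset.disjoint_left.1 (hm hji.symm) hv
    simp [Finsupp.notMem_support_iff.1 hvj]
  · simp

theorem apply_le_of_assembleExponent_eq (hm : Pairwise (Disjoint on fun i => (m i).support))
    {x y : (ι →₀ ℕ) × StandardExponent m} (h : assembleExponent m x = assembleExponent m y)
    (i : ι) : x.1 i ≤ y.1 i := by
  by_contra! hlt
  refine y.2.2 i fun v => ?_
  by_cases hv : v ∈ (m i).support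
  · have hcoord := DFunLike.congr_fun h v
    simp only [assembleExponent, Finsupp.add_apply,
      linearCombination_apply_of_mem_support hm _ hv] at hcoord
    nlinarith
  · simp [Finsupp.notMem_support_iff.1 hv]

theorem assembleExponent_injective (hm : Pairwise (Disjoint on fun i => (m i).support)) :
    Function.Injective (assembleExponent m) := by
  intro x y h
  have hfst : x.1 = y.1 := Finsupp.ext fun i =>
    (apply_le_of_assembleExponent_eq hm h i).antisymm (apply_le_of_assembleExponent_eq hm h.symm i)
  rw [assembleExponent, assembleExponent, hfst] at h
  exact Prod.ext hfst (Subtype.ext (add_right_cancel h))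

theorem assembleExponent_surjective (hm : ∀ i, m i ≠ 0) :
    Function.Surjective (assembleExponent m) := by
  intro s
  induction s using WellFoundedLT.induction with
  | ind s ih =>
  by_cases hs : ∀ i, ¬ m i ≤ s
  · exact ⟨(0, ⟨s, hs⟩), by simp [assembleExponent]⟩
  · push Not at hs
    obtain ⟨i, hi⟩ := hs
    obtain ⟨s, rfl⟩ := exists_add_of_le hi
    obtain ⟨⟨e, n⟩, rfl⟩ := ih s (lt_add_of_pos_left s (pos_iff_ne_zero.2 (hm i)))
    refine ⟨(e + Finsupp.single i 1, n), ?_⟩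
    simp only [assembleExponent, map_add, Finsupp.linearCombination_single, one_smul]
    abel

end CoprimeExponents

section StandardBasis

open scoped Function

variable {σ ι R : Type*} [CommRing R] {m : ι → σ →₀ ℕ} (g : ι → MvPolynomial σ R)

/-- The product `X ^ n * ∏ i, g i ^ e i` for a pair `(e, n)`. When the `g i` have pairwise coprime
leading exponents `m i`, these products form a basis of the polynomial ring. -/
noncomputable def standardProduct (x : (ι →₀ ℕ) × StandardExponent m) : MvPolynomial σ R :=
  monomial x.2 1 * x.1.prod fun i k => g i ^ k

variable {g}

theorem standardProduct_add_single (e : ι →₀ ℕ) (n : StandardExponent m) (i : ι) :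
    standardProduct g (e + Finsupp.single i 1, n) = standardProduct g (e, n) * g i := by
  classical
  rw [standardProduct, Finsupp.prod_add_index' (by simp) (by simp [pow_add]),
    Finsupp.prod_single_index (by simp), pow_one, standardProduct, mul_assoc]

theorem monomial_mul_standardProduct {a : σ →₀ ℕ} (ha : ∀ i, Disjoint a.support (m i).support)
    (e : ι →₀ ℕ) (n : StandardExponent m) :
    monomial a 1 * standardProduct g (e, n) = standardProduct g (e, n.addRight a ha) := by
  simp only [standardProduct, StandardExponent.addRight, ← mul_assoc, monomial_mul, mul_one,
    add_comm a]

theorem standardProduct_mem_span_range {x : (ι →₀ ℕ) × StandardExponent m} (hx : x.1 ≠ 0) :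
    standardProduct g x ∈ Ideal.span (Set.range g) := by
  obtain ⟨e, n⟩ := x
  obtain ⟨i, hi⟩ := Finsupp.ne_iff.1 hx
  have he : e - Finsupp.single i 1 + Finsupp.single i 1 = e :=
    tsub_add_cancel_of_le (Finsupp.single_le_iff.2 (Nat.one_le_iff_ne_zero.2 hi))
  rw [← he, standardProduct_add_single]
  exact Ideal.mul_mem_left _ _ (Ideal.subset_span ⟨i, rfl⟩)

theorem hasLeadingExponent_standardProduct {r : (σ →₀ ℕ) → (σ →₀ ℕ) → Prop} [IsReductionOrder r]
    (hg : ∀ i, HasLeadingExponent r (g i) (m i)) (x : (ι →₀ ℕ) × StandardExponent m) :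
    HasLeadingExponent r (standardProduct g x) (assembleExponent m x) :=
  (hasLeadingExponent_monomial _ isUnit_one).mul (.prod _ fun i _ => (hg i).pow (x.1 i))

theorem exists_basis_eq_standardProduct {r : (σ →₀ ℕ) → (σ →₀ ℕ) → Prop} [IsReductionOrder r]
    (hg : ∀ i, HasLeadingExponent r (g i) (m i)) (hm₀ : ∀ i, m i ≠ 0)
    (hm : Pairwise (Disjoint on fun i => (m i).support)) :
    ∃ b : Module.Basis ((ι →₀ ℕ) × StandardExponent m) R (MvPolynomial σ R),
      ∀ x, b x = standardProduct g x :=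
  have hlead := hasLeadingExponent_standardProduct hg
  ⟨.mk (HasLeadingExponent.linearIndependent hlead (assembleExponent_injective hm))
    (HasLeadingExponent.span_range_eq_top hlead (assembleExponent_surjective hm₀)).ge,
    fun _ => Module.Basis.mk_apply _ _ _⟩

variable {b : Module.Basis ((ι →₀ ℕ) × StandardExponent m) R (MvPolynomial σ R)}

theorem repr_mul_apply_zero (hb : ∀ x, b x = standardProduct g x) (f : MvPolynomial σ R) (i : ι)
    (n : StandardExponent m) : b.repr (f * g i) (0, n) = 0 := by
  have hzero : b.coord (0, n) ∘ₗ LinearMap.mulRight R (g i) = 0 := b.ext fun ⟨e, n'⟩ => by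
    have hmul : b (e, n') * g i = b (e + Finsupp.single i 1, n') := by
      rw [hb, hb, standardProduct_add_single]
    simp [hmul]
  exact DFunLike.congr_fun hzero f

theorem mem_span_range_iff_repr (hb : ∀ x, b x = standardProduct g x) {f : MvPolynomial σ R} :
    f ∈ Ideal.span (Set.range g) ↔ ∀ n, b.repr f (0, n) = 0 := by
  constructor
  · intro hf n
    obtain ⟨c, rfl⟩ := Finsupp.mem_span_range_iff_exists_finsupp.1 hf
    rw [Finsupp.sum, map_sum, Finsupp.finsetSum_apply]
    exact Finset.sum_eq_zero fun i _ => repr_mul_apply_zero hb (c i) i n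
  · intro hf
    rw [← b.linearCombination_repr f, Finsupp.linearCombination_apply]
    refine Ideal.sum_mem _ fun x hx => Submodule.smul_of_tower_mem _ _ ?_
    rw [hb]
    refine standardProduct_mem_span_range fun hx₀ => Finsupp.mem_support_iff.1 hx ?_
    rw [← hf x.2, ← hx₀]

theorem repr_monomial_mul_apply (hb : ∀ x, b x = standardProduct g x) {a : σ →₀ ℕ}
    (ha : ∀ i, Disjoint a.support (m i).support) (f : MvPolynomial σ R) (e : ι →₀ ℕ)
    (n : StandardExponent m) :
    b.repr (monomial a 1 * f) (e, n.addRight a ha) = b.repr f (e, n) := by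
  classical
  have hcoord : b.coord (e, n.addRight a ha) ∘ₗ LinearMap.mulLeft R (monomial a 1) =
      b.coord (e, n) := b.ext fun ⟨e', n'⟩ => by
    have hmul : monomial a 1 * b (e', n') = b (e', n'.addRight a ha) := by
      rw [hb, hb, monomial_mul_standardProduct]
    simp [hmul, Finsupp.single_apply, (StandardExponent.addRight_injective ha).eq_iff]
  exact DFunLike.congr_fun hcoord f

theorem mem_span_range_of_monomial_mul_mem {r : (σ →₀ ℕ) → (σ →₀ ℕ) → Prop} [IsReductionOrder r]
    (hg : ∀ i, HasLeadingExponent r (g i) (m i)) (hm₀ : ∀ i, m i ≠ 0)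
    (hm : Pairwise (Disjoint on fun i => (m i).support)) {a : σ →₀ ℕ}
    (ha : ∀ i, Disjoint a.support (m i).support) {f : MvPolynomial σ R}
    (hf : monomial a 1 * f ∈ Ideal.span (Set.range g)) : f ∈ Ideal.span (Set.range g) := by
  obtain ⟨b, hb⟩ := exists_basis_eq_standardProduct hg hm₀ hm
  rw [mem_span_range_iff_repr hb] at hf ⊢
  intro n
  rw [← repr_monomial_mul_apply hb ha, hf]

end StandardBasis

section Balance

variable {σ : Type*}

theorem weight_sq_le_sq_weight (h : σ → ℕ) (s : σ →₀ ℕ) :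
    Finsupp.weight (fun v => h v ^ 2) s ≤ Finsupp.weight h s ^ 2 := by
  induction s using Finsupp.induction_linear with
  | zero => simp
  | add s t hs ht =>
    calc Finsupp.weight (fun v => h v ^ 2) (s + t)
      _ ≤ Finsupp.weight h s ^ 2 + Finsupp.weight h t ^ 2 := by
        rw [map_add]
        exact add_le_add hs ht
      _ ≤ Finsupp.weight h (s + t) ^ 2 := by
        rw [map_add]
        exact pow_add_pow_le (Nat.zero_le _) (Nat.zero_le _) two_ne_zero
  | single v k =>
    simp only [Finsupp.weight_single, smul_eq_mul, mul_pow]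
    gcongr
    exact Nat.le_self_pow two_ne_zero k

/-- Regarding an exponent as a multiset of variables valued by `h`: `t` and `s` have the same sum
of values, and `t` has the larger sum of squares. -/
def LessBalanced (h : σ → ℕ) (t s : σ →₀ ℕ) : Prop :=
  Finsupp.weight h t = Finsupp.weight h s ∧
    Finsupp.weight (fun v => h v ^ 2) s < Finsupp.weight (fun v => h v ^ 2) t

instance LessBalanced.isReductionOrder (h : σ → ℕ) : IsReductionOrder (LessBalanced h) where
  wf := by
    let deficit (s : σ →₀ ℕ) : ℕ := Finsupp.weight h s ^ 2 - Finsupp.weight (fun v => h v ^ 2) s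
    refine Subrelation.wf (r := InvImage (· < ·) deficit) ?_ (InvImage.wf _ wellFounded_lt)
    rintro t s ⟨hsum, hsq⟩
    have hbound := weight_sq_le_sq_weight h t
    simp only [InvImage, deficit, hsum] at hbound ⊢
    omega
  trans _ _ _ hab hbc := ⟨hab.1.trans hbc.1, hbc.2.trans hab.2⟩
  add_right hab c := by
    simp only [LessBalanced, map_add] at hab ⊢
    omega

theorem lessBalanced_single_add_single {h : σ → ℕ} {c : ℕ} {u v u' v' : σ}
    (hsum : h u + h v = 2 * c) (hu : h u ≠ c) (hu' : h u' = c) (hv' : h v' = c) :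
    LessBalanced h (Finsupp.single u 1 + Finsupp.single v 1)
      (Finsupp.single u' 1 + Finsupp.single v' 1) := by
  simp only [LessBalanced, map_add, Finsupp.weight_single, one_smul, hu', hv']
  refine ⟨by omega, ?_⟩
  rcases hu.lt_or_gt with hlt | hlt <;> nlinarith

end Balance

section Det

open scoped Function

theorem iterate_mul_of_leibniz {R : Type*} [NonUnitalNonAssocSemiring R] (D : R →+ R)
    (hD : ∀ a b, D (a * b) = D a * b + a * D b) (a b : R) (n : ℕ) :
    D^[n] (a * b) = ∑ x ∈ Finset.HasAntidiagonal.antidiagonal n,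
      n.choose x.1 • (D^[x.1] a * D^[x.2] b) := by
  induction n with
  | zero => simp
  | succ n ih =>
    rw [Finset.sum_antidiagonal_choose_succ_nsmul (fun i j => D^[i] a * D^[j] b) n,
      Function.iterate_succ_apply', ih, map_sum, ← Finset.sum_add_distrib]
    refine Finset.sum_congr rfl fun x hx => ?_
    rw [← Nat.choose_symm_of_eq_add (Finset.HasAntidiagonal.mem_antidiagonal.1 hx).symm, map_nsmul,
      hD, ← smul_add, Function.iterate_succ_apply', Function.iterate_succ_apply', add_comm]

/-- The exponent of `c_{0τ}^{(j)} * c_{1,1-τ}^{(k)}` for `x = (τ, j, k)`, with matrix entries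
indexed from `0`. These are the exponents of the terms of the derivatives of `det`. -/
noncomputable def detTermExponent (x : Fin 2 × ℕ × ℕ) : DVar →₀ ℕ :=
  Finsupp.single ((0, x.1), x.2.1) 1 + Finsupp.single ((1, x.1.rev), x.2.2) 1

variable {R : Type} [CommRing R] {δ : R → R} {D : DiffPolyC R → DiffPolyC R}

theorem IsDiffStructure.iterate_X (hD : IsDiffStructure δ D) (v : Fin 2 × Fin 2) (n : ℕ) :
    D^[n] (X (v, 0)) = X (v, n) := by
  obtain ⟨-, -, -, -, -, hX⟩ := hD
  induction n with
  | zero => rfl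
  | succ n ih => rw [Function.iterate_succ_apply', ih, hX]

theorem IsDiffStructure.iterate_detC (hD : IsDiffStructure δ D) (n : ℕ) :
    D^[n] (detC R) = ∑ x ∈ Finset.univ ×ˢ Finset.HasAntidiagonal.antidiagonal n,
      monomial (detTermExponent x) ((-1) ^ (x.1 : ℕ) * (n.choose x.2.1 : R)) := by
  have ⟨_, _, hadd, hmul, _, _⟩ := hD
  let A : DiffPolyC R →+ DiffPolyC R := .mk' D hadd
  have hsub (a b : DiffPolyC R) : D^[n] (a - b) = D^[n] a - D^[n] b := iterate_map_sub A n a b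
  have hleibniz (a b : DiffPolyC R) : D^[n] (a * b) =
      ∑ x ∈ Finset.HasAntidiagonal.antidiagonal n, n.choose x.1 • (D^[x.1] a * D^[x.2] b) :=
    iterate_mul_of_leibniz A hmul a b n
  have hterm (u v : DVar) (k : ℕ) : (k • (X u * X v) : DiffPolyC R) =
      monomial (Finsupp.single u 1 + Finsupp.single v 1) (k : R) := by
    rw [X, X, monomial_mul, one_mul, ← map_nsmul, nsmul_one]
  simp only [detC, hsub, hleibniz, hD.iterate_X, hterm, Finset.sum_product, Fin.sum_univ_two,
    detTermExponent]
  simp [sub_eq_add_neg]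

/-- The weight of `c_{ij}^{(n)}`, with `i`, `j` indexed from `0`. It is chosen so that all terms of
`det^{(n)}` have the same weight `2 * n + 2`, and for `n ≥ 1` exactly one of them is the product of
two variables of weight `n + 1`. -/
def balancingWeight (v : DVar) : ℕ := 2 * v.2 + v.1.1 + v.1.2

/-- The index of the most balanced term of `det^{(i + 1)}`. -/
def leadingDetTerm (i : ℕ) : Fin 2 × ℕ × ℕ := (Fin.ofNat 2 i, i / 2 + 1, (i + 1) / 2)

theorem balancingWeight_add (τ : Fin 2) (j k : ℕ) :
    balancingWeight ((0, τ), j) + balancingWeight ((1, τ.rev), k) = 2 * (j + k + 1) := by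
  simp only [balancingWeight, Fin.val_rev, Fin.coe_ofNat_eq_mod]
  omega

theorem balancingWeight_eq_iff {i j k : ℕ} (τ : Fin 2) (hjk : j + k = i + 1) :
    balancingWeight ((0, τ), j) = i + 2 ↔ (τ, j, k) = leadingDetTerm i := by
  simp only [balancingWeight, leadingDetTerm, Prod.mk.injEq, Fin.ext_iff, Fin.val_ofNat,
    Fin.coe_ofNat_eq_mod]
  omega

theorem leadingDetTerm_add (i : ℕ) : (leadingDetTerm i).2.1 + (leadingDetTerm i).2.2 = i + 1 := by
  simp only [leadingDetTerm]
  omega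

theorem balancingWeight_leadingDetTerm (i : ℕ) :
    balancingWeight ((0, (leadingDetTerm i).1), (leadingDetTerm i).2.1) = i + 2 ∧
      balancingWeight ((1, (leadingDetTerm i).1.rev), (leadingDetTerm i).2.2) = i + 2 := by
  have hfst : balancingWeight ((0, (leadingDetTerm i).1), (leadingDetTerm i).2.1) = i + 2 :=
    (balancingWeight_eq_iff _ (leadingDetTerm_add i)).2 rfl
  have hsum := balancingWeight_add (leadingDetTerm i).1 (leadingDetTerm i).2.1
    (leadingDetTerm i).2.2
  rw [leadingDetTerm_add, hfst] at hsum
  exact ⟨hfst, by omega⟩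

theorem balancingWeight_of_mem_support {i : ℕ} {v : DVar}
    (hv : v ∈ (detTermExponent (leadingDetTerm i)).support) : balancingWeight v = i + 2 := by
  classical
  rcases Finset.mem_union.1 (Finsupp.support_add hv) with hv | hv
  all_goals obtain rfl := Finset.mem_singleton.1 (Finsupp.support_single_subset hv)
  · exact (balancingWeight_leadingDetTerm i).1
  · exact (balancingWeight_leadingDetTerm i).2

theorem pairwise_disjoint_support_leadingDetTerm :
    Pairwise (Disjoint on fun i => (detTermExponent (leadingDetTerm i)).support) := by
  intro i j hij
  refine Finset.disjoint_left.2 fun v hi hj => hij ?_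
  have hvi := balancingWeight_of_mem_support hi
  have hvj := balancingWeight_of_mem_support hj
  omega

theorem disjoint_support_single_leadingDetTerm {v : DVar} (hv : balancingWeight v ≤ 1) (n i : ℕ) :
    Disjoint (Finsupp.single v n).support (detTermExponent (leadingDetTerm i)).support := by
  refine Finset.disjoint_left.2 fun u hu hi => ?_
  obtain rfl := Finset.mem_singleton.1 (Finsupp.support_single_subset hu)
  have hui := balancingWeight_of_mem_support hi
  omega

theorem lessBalanced_detTermExponent {i : ℕ} {x : Fin 2 × ℕ × ℕ}
    (hx : x.2.1 + x.2.2 = i + 1) (hne : x ≠ leadingDetTerm i) :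
    LessBalanced balancingWeight (detTermExponent x) (detTermExponent (leadingDetTerm i)) := by
  have hlead := balancingWeight_leadingDetTerm i
  refine lessBalanced_single_add_single ?_ ((balancingWeight_eq_iff _ hx).not.2 hne)
    hlead.1 hlead.2
  rw [balancingWeight_add, hx]

theorem IsDiffStructure.hasLeadingExponent_iterate_detC [Algebra ℚ R] (hD : IsDiffStructure δ D)
    (i : ℕ) : HasLeadingExponent (LessBalanced balancingWeight) (D^[i + 1] (detC R))
      (detTermExponent (leadingDetTerm i)) := by
  rw [hD.iterate_detC]
  refine .sum (k := leadingDetTerm i) ?_ (hasLeadingExponent_monomial _ ?_) ?_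
  · simp [leadingDetTerm_add]
  · have hchoose : (i + 1).choose (i / 2 + 1) ≠ 0 := (Nat.choose_pos (by omega)).ne'
    have hunit : IsUnit ((i + 1).choose (i / 2 + 1) : R) := by
      simpa using (IsUnit.mk0 ((i + 1).choose (i / 2 + 1) : ℚ) (mod_cast hchoose)).map
        (algebraMap ℚ R)
    exact (isUnit_one.neg.pow _).mul hunit
  · intro x hx hne t ht
    classical
    rw [coeff_monomial] at ht
    obtain rfl := of_not_not fun h => ht (if_neg h)
    exact lessBalanced_detTermExponent
      (Finset.HasAntidiagonal.mem_antidiagonal.1 (Finset.mem_product.1 hx).2) hne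

end Det

theorem detPrime_saturated_general {R : Type} [CommRing R] [Algebra ℚ R]
    (δ : R → R) (D : DiffPolyC R → DiffPolyC R)
    (hD : IsDiffStructure δ D)
    (f : DiffPolyC R) (n : ℕ)
    (hf : (X ((0, 0), 0) : DiffPolyC R) ^ n * f ∈
      Ideal.span {g : DiffPolyC R | ∃ i : ℕ, 1 ≤ i ∧ g = D^[i] (detC R)}) :
    f ∈ Ideal.span {g : DiffPolyC R | ∃ i : ℕ, 1 ≤ i ∧ g = D^[i] (detC R)} := by
  have hgens : {g : DiffPolyC R | ∃ i : ℕ, 1 ≤ i ∧ g = D^[i] (detC R)} =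
      Set.range fun i => D^[i + 1] (detC R) := by
    ext g
    constructor
    · rintro ⟨i, hi, rfl⟩
      exact ⟨i - 1, by simp only [Nat.sub_add_cancel hi]⟩
    · rintro ⟨i, rfl⟩
      exact ⟨i + 1, by simp⟩
  rw [hgens] at hf ⊢
  rw [X_pow_eq_monomial] at hf
  exact mem_span_range_of_monomial_mul_mem hD.hasLeadingExponent_iterate_detC
    (fun i => by simp [detTermExponent]) pairwise_disjoint_support_leadingDetTerm
    (disjoint_support_single_leadingDetTerm (by simp [balancingWeight]) n) hf

/-- The differential ideal `[det']` of `C` is saturated with respect to `c₁₁`: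
if `c₁₁ ^ n · f ∈ [det']` for some `n ≥ 0`, then `f ∈ [det']`. -/
theorem detPrime_saturated {K : Type} [Field K] [CharZero K]
    (δ : K → K) (D : DiffPolyC K → DiffPolyC K)
    (hD : IsDiffStructure δ D)
    (f : DiffPolyC K) (n : ℕ)
    (hf : (X ((0, 0), 0) : DiffPolyC K) ^ n * f ∈
      Ideal.span {g : DiffPolyC K | ∃ i : ℕ, 1 ≤ i ∧ g = D^[i] (detC K)}) :
    f ∈ Ideal.span {g : DiffPolyC K | ∃ i : ℕ, 1 ≤ i ∧ g = D^[i] (detC K)} :=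
  detPrime_saturated_general δ D hD f n hf
end

section
/- For every integer q ≥ 1, let I_q be the ordinary (non-differential) ideal of C generated by det^{(1)}, det^{(2)}, …, det^{(q)}. Then I_q is saturated with respect to c11: for every f ∈ C, if c11^n · f ∈ I_q for some integer n ≥ 0, then f ∈ I_q. -/
open MvPolynomial

/-!
The derivatives `det⁽ᵏ⁾` have pairwise coprime leading monomials that avoid `c₁₁`. Give
`c_{ij}^{(n)}` (indices from `0`) the level `2n + i + j - 1`. The two variables in a monomial of
`det⁽ᵏ⁾` have levels adding up to `2k`, and exactly one monomial has both levels equal to `k`. A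
weight that is strictly concave in the level makes it the leading one, its coefficient is a
binomial coefficient up to sign, and its variables determine `k`; the level of `c₁₁` is `-1`.

For polynomials `d k` with pairwise coprime leading monomials `m k`, replacing in each monomial
the maximal powers of the `m k` by powers of the `d k` is a linear map that is unitriangular for
the weight, hence bijective. It turns multiplication by `m k` into multiplication by `d k` and
commutes with multiplication by monomials coprime to all `m k`, so saturation is inherited from
the monomial ideal generated by the `m k`, where it is evident.
-/

section MonomialExponent

variable {σ ι : Type*} {m s t : σ →₀ ℕ}

/-- The largest `e` such that the `e`-th power of the monomial with exponent vector `m` divides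
the monomial with exponent vector `s`. It has the junk value `0` at `m = 0`. -/
noncomputable def monomialMultiplicity (m s : σ →₀ ℕ) : ℕ := sSup {e | e • m ≤ s}

theorem le_monomialMultiplicity_iff (hm : m ≠ 0) {e : ℕ} :
    e ≤ monomialMultiplicity m s ↔ e • m ≤ s := by
  obtain ⟨i, hi⟩ := Finsupp.ne_iff.mp hm
  have hi_pos : 1 ≤ m i := Nat.one_le_iff_ne_zero.mpr hi
  have hbdd : BddAbove {e | e • m ≤ s} :=
    ⟨s i, fun e he => (Nat.le_mul_of_pos_right e hi_pos).trans (he i)⟩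
  have hmem : monomialMultiplicity m s • m ≤ s := Nat.sSup_mem ⟨0, by simp⟩ hbdd
  exact ⟨fun he => (nsmul_le_nsmul_left zero_le he).trans hmem, fun he => le_csSup hbdd he⟩

theorem monomialMultiplicity_nsmul_le (m s : σ →₀ ℕ) : monomialMultiplicity m s • m ≤ s := by
  rcases eq_or_ne m 0 with rfl | hm
  · simp
  · exact (le_monomialMultiplicity_iff hm).mp le_rfl

theorem monomialMultiplicity_self_add (hm : m ≠ 0) (s : σ →₀ ℕ) :
    monomialMultiplicity m (m + s) = monomialMultiplicity m s + 1 := by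
  refine eq_of_forall_le_iff fun e => ?_
  cases e with
  | zero => simp
  | succ e =>
    rw [le_monomialMultiplicity_iff hm, Nat.succ_le_succ_iff, le_monomialMultiplicity_iff hm,
      succ_nsmul', add_le_add_iff_left]

theorem eq_zero_or_eq_zero_of_disjoint (h : Disjoint s t) (i : σ) : s i = 0 ∨ t i = 0 := by
  have hinf : s ⊓ t = 0 := disjoint_iff.mp h
  simpa using DFunLike.congr_fun hinf i

theorem nsmul_le_add_iff_of_disjoint (h : Disjoint t m) {e : ℕ} : e • m ≤ t + s ↔ e • m ≤ s := by
  refine ⟨fun he i => ?_, fun he => he.trans le_add_self⟩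
  rcases eq_zero_or_eq_zero_of_disjoint h i with hti | hmi
  · simpa [hti] using he i
  · simp [hmi]

theorem monomialMultiplicity_add_of_disjoint (h : Disjoint t m) (s : σ →₀ ℕ) :
    monomialMultiplicity m (t + s) = monomialMultiplicity m s := by
  simp only [monomialMultiplicity, nsmul_le_add_iff_of_disjoint h]

variable [Fintype ι] {v : ι → σ →₀ ℕ}

theorem sum_monomialMultiplicity_nsmul_le (hv : Pairwise fun k l => Disjoint (v k) (v l))
    (s : σ →₀ ℕ) : ∑ k, monomialMultiplicity (v k) s • v k ≤ s := by
  intro i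
  rw [Finsupp.finsetSum_apply]
  by_cases hi : ∃ k, v k i ≠ 0
  · obtain ⟨k, hk⟩ := hi
    have hother (l : ι) (hl : l ≠ k) : v l i = 0 :=
      (eq_zero_or_eq_zero_of_disjoint (hv hl) i).resolve_right hk
    rw [Finset.sum_eq_single_of_mem k (Finset.mem_univ k) fun l _ hl => by simp [hother l hl]]
    exact monomialMultiplicity_nsmul_le (v k) s i
  · push Not at hi
    simp [hi]

end MonomialExponent

section LeadingTerm

variable {σ ι R : Type*} [CommRing R] {w : σ → ℕ}

/-- The polynomials all of whose monomials have `w`-weight less than `N`. -/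
noncomputable def weightLT (R : Type*) [CommRing R] (w : σ → ℕ) (N : ℕ) :
    Submodule R (MvPolynomial σ R) :=
  restrictSupport R {s | Finsupp.weight w s < N}

theorem weightLT_mono {M N : ℕ} (h : M ≤ N) : weightLT R w M ≤ weightLT R w N :=
  restrictSupport_mono R fun _ hs => lt_of_lt_of_le hs h

theorem monomial_mem_weightLT {N : ℕ} {s : σ →₀ ℕ} (h : Finsupp.weight w s < N) (c : R) :
    monomial s c ∈ weightLT R w N :=
  (monomial_mem_restrictSupport R).mpr (Or.inl h)

theorem mul_mem_weightLT {M N : ℕ} {f g : MvPolynomial σ R} (hf : f ∈ weightLT R w M)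
    (hg : g ∈ weightLT R w (N + 1)) : f * g ∈ weightLT R w (M + N) := by
  have hfg := Submodule.mul_mem_mul hf hg
  rw [weightLT, weightLT, ← restrictSupport_add] at hfg
  refine restrictSupport_mono R ?_ hfg
  rintro _ ⟨s, hs, t, ht, rfl⟩
  simp only [Set.mem_ofPred_eq, map_add] at hs ht ⊢
  omega

theorem weightLT_zero : weightLT R w 0 = ⊥ := by
  refine (Submodule.eq_bot_iff _).mpr fun f hf => ?_
  rw [weightLT, mem_restrictSupport_iff] at hf
  simpa using hf

theorem exists_mem_weightLT (w : σ → ℕ) (f : MvPolynomial σ R) : ∃ N, f ∈ weightLT R w N :=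
  ⟨f.support.sup (Finsupp.weight w) + 1, fun _ hs => Nat.lt_succ_of_le (Finset.le_sup hs)⟩

/-- `f` is `c` times the monomial with exponent vector `s`, up to terms of smaller `w`-weight.
The coefficient `c` may vanish. -/
def HasLeadingTerm (w : σ → ℕ) (f : MvPolynomial σ R) (s : σ →₀ ℕ) (c : R) : Prop :=
  f - monomial s c ∈ weightLT R w (Finsupp.weight w s)

namespace HasLeadingTerm

variable {f g : MvPolynomial σ R} {s t : σ →₀ ℕ} {a b : R}

theorem monomial_self (w : σ → ℕ) (s : σ →₀ ℕ) (c : R) : HasLeadingTerm w (monomial s c) s c := by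
  simp [HasLeadingTerm]

theorem mem_weightLT (h : HasLeadingTerm w f s a) :
    f ∈ weightLT R w (Finsupp.weight w s + 1) := by
  simpa using add_mem (weightLT_mono (Nat.le_succ _) h)
    (monomial_mem_weightLT (Nat.lt_succ_self (Finsupp.weight w s)) a)

theorem smul (h : HasLeadingTerm w f s a) (c : R) : HasLeadingTerm w (c • f) s (c * a) := by
  simpa [HasLeadingTerm, smul_sub, smul_monomial] using Submodule.smul_mem _ c h

theorem mul (hf : HasLeadingTerm w f s a) (hg : HasLeadingTerm w g t b) :
    HasLeadingTerm w (f * g) (s + t) (a * b) := by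
  have hsplit : f * g - monomial (s + t) (a * b) =
      (f - monomial s a) * g + (g - monomial t b) * monomial s a := by
    rw [← monomial_mul]
    ring
  rw [HasLeadingTerm, hsplit, map_add]
  refine add_mem (mul_mem_weightLT hf hg.mem_weightLT) ?_
  rw [add_comm]
  exact mul_mem_weightLT hg (monomial_mem_weightLT (Nat.lt_succ_self _) a)

theorem pow (h : HasLeadingTerm w f s a) (n : ℕ) : HasLeadingTerm w (f ^ n) (n • s) (a ^ n) := by
  induction n with
  | zero => simpa using monomial_self w 0 (1 : R)
  | succ n ih => simpa only [pow_succ, succ_nsmul] using ih.mul h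

theorem prod (T : Finset ι) {f : ι → MvPolynomial σ R} {s : ι → σ →₀ ℕ} {a : ι → R}
    (h : ∀ k, HasLeadingTerm w (f k) (s k) (a k)) :
    HasLeadingTerm w (∏ k ∈ T, f k) (∑ k ∈ T, s k) (∏ k ∈ T, a k) := by
  classical
  induction T using Finset.induction_on with
  | empty => simpa using monomial_self w 0 (1 : R)
  | insert k T hk ih =>
    simpa only [Finset.prod_insert hk, Finset.sum_insert hk] using (h k).mul ih

theorem sum_monomial {T : Finset ι} {s : ι → σ →₀ ℕ} {k : ι} (hk : k ∈ T)
    (hlt : ∀ l ∈ T, l ≠ k → Finsupp.weight w (s l) < Finsupp.weight w (s k)) (a : ι → R) :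
    HasLeadingTerm w (∑ l ∈ T, monomial (s l) (a l)) (s k) (a k) := by
  classical
  rw [HasLeadingTerm, ← Finset.add_sum_erase T _ hk, add_sub_cancel_left]
  refine sum_mem fun l hl => monomial_mem_weightLT ?_ (a l)
  exact hlt l (Finset.mem_of_mem_erase hl) (Finset.ne_of_mem_erase hl)

end HasLeadingTerm

variable {Φ : MvPolynomial σ R →ₗ[R] MvPolynomial σ R}

theorem map_sub_self_mem_weightLT (hΦ : ∀ s, HasLeadingTerm w (Φ (monomial s 1)) s 1) {N : ℕ}
    {f : MvPolynomial σ R} (hf : f ∈ weightLT R w (N + 1)) : Φ f - f ∈ weightLT R w N := by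
  suffices h : weightLT R w (N + 1) ≤ (weightLT R w N).comap (Φ - LinearMap.id) from h hf
  rw [weightLT, restrictSupport_eq_span, Submodule.span_le]
  rintro _ ⟨s, hs, rfl⟩
  exact weightLT_mono (Nat.lt_succ_iff.mp hs) (hΦ s)

theorem bijective_of_hasLeadingTerm (hΦ : ∀ s, HasLeadingTerm w (Φ (monomial s 1)) s 1) :
    Function.Bijective Φ := by
  constructor
  · rw [injective_iff_map_eq_zero]
    intro f hf
    obtain ⟨N, hN⟩ := exists_mem_weightLT w f
    induction N with
    | zero => simpa [weightLT_zero] using hN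
    | succ N ih => exact ih (by simpa [hf] using map_sub_self_mem_weightLT hΦ hN)
  · intro f
    obtain ⟨N, hN⟩ := exists_mem_weightLT w f
    induction N generalizing f with
    | zero => exact ⟨0, by simpa [weightLT_zero, eq_comm] using hN⟩
    | succ N ih =>
      obtain ⟨g, hg⟩ := ih (Φ f - f) (map_sub_self_mem_weightLT hΦ hN)
      exact ⟨f - g, by rw [map_sub, hg, sub_sub_cancel]⟩

end LeadingTerm

section Deformation

variable {σ ι R : Type*} [CommRing R] [Fintype ι]

/-- The linear map that, for monomials `m k` in pairwise disjoint sets of variables, replaces the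
largest possible power of each `m k` dividing a given monomial by the same power of `d k`. -/
noncomputable def deformation (m : ι → σ →₀ ℕ) (d : ι → MvPolynomial σ R) :
    MvPolynomial σ R →ₗ[R] MvPolynomial σ R :=
  (basisMonomials σ R).constr R fun s =>
    (∏ k, d k ^ monomialMultiplicity (m k) s) *
      monomial (s - ∑ k, monomialMultiplicity (m k) s • m k) 1

variable {m : ι → σ →₀ ℕ} {d : ι → MvPolynomial σ R}

theorem deformation_monomial (m : ι → σ →₀ ℕ) (d : ι → MvPolynomial σ R) (s : σ →₀ ℕ) :
    deformation m d (monomial s 1) =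
      (∏ k, d k ^ monomialMultiplicity (m k) s) *
        monomial (s - ∑ k, monomialMultiplicity (m k) s • m k) 1 := by
  have hbasis : monomial s (1 : R) = basisMonomials σ R s := by rw [coe_basisMonomials]
  rw [deformation, hbasis, Module.Basis.constr_basis]

theorem deformation_monomial_mul_eq_mul {t : σ →₀ ℕ} {p : MvPolynomial σ R}
    (h : ∀ s, deformation m d (monomial (t + s) 1) = p * deformation m d (monomial s 1))
    (f : MvPolynomial σ R) :
    deformation m d (monomial t 1 * f) = p * deformation m d f := by
  suffices hcomp : deformation m d ∘ₗ LinearMap.mulLeft R (monomial t 1) =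
      LinearMap.mulLeft R p ∘ₗ deformation m d from LinearMap.congr_fun hcomp f
  exact (basisMonomials σ R).ext fun s => by simpa [monomial_mul] using h s

theorem deformation_monomial_generator_mul (hm : Pairwise fun k l => Disjoint (m k) (m l))
    (hm_ne : ∀ k, m k ≠ 0) (k : ι) (f : MvPolynomial σ R) :
    deformation m d (monomial (m k) 1 * f) = d k * deformation m d f := by
  classical
  refine deformation_monomial_mul_eq_mul (fun s => ?_) f
  have hmult (l : ι) : monomialMultiplicity (m l) (m k + s) =
      (if l = k then 1 else 0) + monomialMultiplicity (m l) s := by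
    split_ifs with hl
    · rw [hl, monomialMultiplicity_self_add (hm_ne k), add_comm]
    · rw [monomialMultiplicity_add_of_disjoint (hm (Ne.symm hl)), zero_add]
  simp only [deformation_monomial, hmult, add_smul, Finset.sum_add_distrib, ite_smul, one_smul,
    zero_smul, Finset.sum_ite_eq', Finset.mem_univ, if_true, add_tsub_add_eq_tsub_left, pow_add,
    Finset.prod_mul_distrib, pow_ite, pow_one, pow_zero, Finset.prod_ite_eq', mul_assoc]

theorem deformation_monomial_mul_of_disjoint (hm : Pairwise fun k l => Disjoint (m k) (m l))
    {t : σ →₀ ℕ} (ht : ∀ k, Disjoint t (m k)) (f : MvPolynomial σ R) :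
    deformation m d (monomial t 1 * f) = monomial t 1 * deformation m d f := by
  refine deformation_monomial_mul_eq_mul (fun s => ?_) f
  simp only [deformation_monomial, monomialMultiplicity_add_of_disjoint (ht _),
    add_tsub_assoc_of_le (sum_monomialMultiplicity_nsmul_le hm s)]
  rw [mul_left_comm, monomial_mul, one_mul]

theorem deformation_bijective {w : σ → ℕ} (hm : Pairwise fun k l => Disjoint (m k) (m l))
    (hd : ∀ k, HasLeadingTerm w (d k) (m k) 1) : Function.Bijective (deformation m d) := by
  refine bijective_of_hasLeadingTerm (w := w) fun s => ?_
  have h := (HasLeadingTerm.prod Finset.univ fun k =>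
    (hd k).pow (monomialMultiplicity (m k) s)).mul
      (HasLeadingTerm.monomial_self w (s - ∑ k, monomialMultiplicity (m k) s • m k) 1)
  rw [add_tsub_cancel_of_le (sum_monomialMultiplicity_nsmul_le hm s)] at h
  simpa [deformation_monomial] using h

end Deformation

section Saturation

variable {σ ι R : Type*} [CommRing R]

theorem map_mem_span_range_of_map_mul {A B : Type*} [CommSemiring A] [CommSemiring B]
    {Φ : A →+ B} {a : ι → A} {b : ι → B} (hΦ : ∀ k f, Φ (a k * f) = b k * Φ f) {f : A}
    (hf : f ∈ Ideal.span (Set.range a)) : Φ f ∈ Ideal.span (Set.range b) := by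
  induction hf using Submodule.closure_induction with
  | zero => simp
  | add f g _ _ hf hg => simpa using add_mem hf hg
  | smul_mem r _ ha =>
    obtain ⟨k, rfl⟩ := ha
    rw [smul_eq_mul, mul_comm, hΦ]
    exact Ideal.mul_mem_right _ _ (Ideal.subset_span ⟨k, rfl⟩)

theorem mem_span_range_monomial_of_monomial_mul_mem {m : ι → σ →₀ ℕ} {t : σ →₀ ℕ}
    (ht : ∀ k, Disjoint t (m k)) {f : MvPolynomial σ R}
    (hf : monomial t 1 * f ∈ Ideal.span (Set.range fun k => monomial (m k) (1 : R))) :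
    f ∈ Ideal.span (Set.range fun k => monomial (m k) (1 : R)) := by
  have himage : (Set.range fun k => monomial (m k) (1 : R)) =
      (fun s => monomial s 1) '' Set.range m := Set.range_comp (fun s => monomial s 1) m
  rw [himage, mem_ideal_span_monomial_image] at hf ⊢
  intro s hs
  have hts : t + s ∈ (monomial t 1 * f).support := by
    rwa [mem_support_iff, coeff_monomial_mul, one_mul, ← mem_support_iff]
  obtain ⟨_, ⟨k, rfl⟩, hk⟩ := hf (t + s) hts
  exact ⟨m k, ⟨k, rfl⟩, by simpa using (nsmul_le_add_iff_of_disjoint (ht k) (e := 1)).mp (by simpa)⟩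

variable [Finite ι] {m : ι → σ →₀ ℕ} {d : ι → MvPolynomial σ R}

theorem mem_span_range_of_monomial_mul_mem_of_monic {w : σ → ℕ}
    (hm : Pairwise fun k l => Disjoint (m k) (m l)) (hm_ne : ∀ k, m k ≠ 0)
    (hd : ∀ k, HasLeadingTerm w (d k) (m k) 1) {t : σ →₀ ℕ} (ht : ∀ k, Disjoint t (m k))
    {f : MvPolynomial σ R} (hf : monomial t 1 * f ∈ Ideal.span (Set.range d)) :
    f ∈ Ideal.span (Set.range d) := by
  cases nonempty_fintype ι
  let Φ := LinearEquiv.ofBijective (deformation m d) (deformation_bijective hm hd)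
  have hΦ_gen (k : ι) (g : MvPolynomial σ R) : Φ (monomial (m k) 1 * g) = d k * Φ g :=
    deformation_monomial_generator_mul hm hm_ne k g
  have hΦ_symm (k : ι) (g : MvPolynomial σ R) :
      Φ.symm (d k * g) = monomial (m k) 1 * Φ.symm g := by
    rw [LinearEquiv.symm_apply_eq, hΦ_gen, LinearEquiv.apply_symm_apply]
  obtain ⟨g, rfl⟩ := Φ.surjective f
  have hg : monomial t 1 * g ∈ Ideal.span (Set.range fun k => monomial (m k) (1 : R)) := by
    have h := map_mem_span_range_of_map_mul (Φ := Φ.symm.toLinearMap.toAddMonoidHom) hΦ_symm hf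
    have hΦ_t : monomial t 1 * Φ g = Φ (monomial t 1 * g) :=
      (deformation_monomial_mul_of_disjoint hm ht g).symm
    rw [hΦ_t] at h
    simpa using h
  exact map_mem_span_range_of_map_mul (Φ := Φ.toLinearMap.toAddMonoidHom) hΦ_gen
    (mem_span_range_monomial_of_monomial_mul_mem ht hg)

theorem mem_span_range_of_monomial_mul_mem_s8 {w : σ → ℕ} {c : ι → R} (hc : ∀ k, IsUnit (c k))
    (hm : Pairwise fun k l => Disjoint (m k) (m l)) (hm_ne : ∀ k, m k ≠ 0)
    (hd : ∀ k, HasLeadingTerm w (d k) (m k) (c k)) {t : σ →₀ ℕ} (ht : ∀ k, Disjoint t (m k))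
    {f : MvPolynomial σ R} (hf : monomial t 1 * f ∈ Ideal.span (Set.range d)) :
    f ∈ Ideal.span (Set.range d) := by
  choose u hu using hc
  have hspan : Ideal.span (Set.range d) =
      Ideal.span (Set.range fun k => (↑(u k)⁻¹ : R) • d k) := by
    simp only [Ideal.span_range_eq_iSup, smul_eq_C_mul,
      Ideal.span_singleton_mul_left_unit ((u _)⁻¹.isUnit.map C)]
  rw [hspan] at hf ⊢
  refine mem_span_range_of_monomial_mul_mem_of_monic (w := w) hm hm_ne (fun k => ?_) ht hf
  simpa [← hu] using (hd k).smul (↑(u k)⁻¹ : R)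

end Saturation

section Determinant

open Finset

theorem iterate_derivation_mul {R A : Type*} [CommSemiring R] [CommSemiring A] [Algebra R A]
    (D : Derivation R A A) (f g : A) (n : ℕ) :
    D^[n] (f * g) = ∑ ij ∈ antidiagonal n, n.choose ij.1 • (D^[ij.1] f * D^[ij.2] g) := by
  induction n with
  | zero => simp
  | succ n ih =>
    rw [sum_antidiagonal_choose_succ_nsmul (fun i j => D^[i] f * D^[j] g) n,
      Function.iterate_succ_apply', ih, map_sum, ← sum_add_distrib]
    refine sum_congr rfl fun ⟨i, j⟩ hij => ?_
    have hchoose : n.choose j = n.choose i :=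
      (n.choose_symm_of_eq_add (HasAntidiagonal.mem_antidiagonal.mp hij).symm).symm
    simp only [map_nsmul, Derivation.leibniz, smul_eq_mul, Function.iterate_succ_apply', hchoose,
      smul_add, mul_comm (D^[j] g)]

/-- The integer `2n + i + j - 1` attached to `c_{ij}^{(n)}`, with `i` and `j` counted from `0`.
In every monomial of `det⁽ᵏ⁾` the levels of the two variables add up to `2k`. -/
def DVar.level (v : DVar) : ℤ := 2 * v.2 + (v.1.1 : ℕ) + (v.1.2 : ℕ) - 1

/-- A weight that is strictly concave in the level of a variable of order at most `q`, so that
among products of two variables with given sum of levels those with equal levels are heaviest.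
The truncation by `Int.toNat` takes effect only for variables of order greater than `q`. -/
def DVar.levelWeight (q : ℕ) (v : DVar) : ℕ := ((2 * q + 1) ^ 2 - v.level ^ 2 : ℤ).toNat

theorem DVar.coe_levelWeight {q : ℕ} {v : DVar} (hv : v.2 ≤ q) :
    (v.levelWeight q : ℤ) = (2 * q + 1) ^ 2 - v.level ^ 2 := by
  refine Int.toNat_of_nonneg (sub_nonneg.mpr (sq_le_sq' ?_ ?_)) <;>
  · simp only [level]
    omega

/-- The exponent vector of `c_{0,j}^{(a)} c_{1,1-j}^{(b)}`, where `x = (j, a, b)` and the entries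
are counted from `0`. For `a + b = k` these are the monomials of `det⁽ᵏ⁾`. -/
noncomputable def detExponent (x : Fin 2 × ℕ × ℕ) : DVar →₀ ℕ :=
  Finsupp.single ((0, x.1), x.2.1) 1 + Finsupp.single ((1, x.1.rev), x.2.2) 1

/-- The `(j, a, b)` for which both variables of `detExponent (j, a, b)` have level `k`. -/
def detLeadingIndex (k : ℕ) : Fin 2 × ℕ × ℕ := (Fin.ofNat 2 (k + 1), (k + 1) / 2, k / 2)

theorem detLeadingIndex_add (k : ℕ) : (detLeadingIndex k).2.1 + (detLeadingIndex k).2.2 = k := by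
  simp only [detLeadingIndex]
  omega

theorem level_add_level_eq {k a b : ℕ} (hab : a + b = k) (j : Fin 2) :
    DVar.level ((0, j), a) + DVar.level ((1, j.rev), b) = 2 * k := by
  simp only [DVar.level, Fin.val_rev, Fin.val_zero, Fin.val_one]
  omega

theorem level_eq_iff_eq_detLeadingIndex {k : ℕ} {x : Fin 2 × ℕ × ℕ} (hx : x.2.1 + x.2.2 = k) :
    DVar.level ((0, x.1), x.2.1) = k ↔ x = detLeadingIndex k := by
  obtain ⟨j, a, b⟩ := x
  simp only [detLeadingIndex, DVar.level, Prod.mk.injEq, Fin.ext_iff, Fin.val_ofNat, Fin.val_zero]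
    at hx ⊢
  omega

theorem level_detLeadingIndex (k : ℕ) :
    DVar.level ((0, (detLeadingIndex k).1), (detLeadingIndex k).2.1) = k :=
  (level_eq_iff_eq_detLeadingIndex (detLeadingIndex_add k)).mpr rfl

theorem coe_weight_detExponent {q k : ℕ} (hk : k ≤ q) {x : Fin 2 × ℕ × ℕ}
    (hx : x.2.1 + x.2.2 = k) :
    (Finsupp.weight (DVar.levelWeight q) (detExponent x) : ℤ) =
      2 * (2 * q + 1) ^ 2 - 2 * k ^ 2 - 2 * (DVar.level ((0, x.1), x.2.1) - k) ^ 2 := by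
  have hlevel := eq_sub_of_add_eq' (level_add_level_eq hx x.1)
  simp only [detExponent, map_add, Finsupp.weight_single, one_smul, Nat.cast_add]
  rw [DVar.coe_levelWeight (by simp only; omega), DVar.coe_levelWeight (by simp only; omega),
    hlevel]
  ring

theorem weight_detExponent_lt {q k : ℕ} (hk : k ≤ q) {x : Fin 2 × ℕ × ℕ}
    (hx : x.2.1 + x.2.2 = k) (hne : x ≠ detLeadingIndex k) :
    Finsupp.weight (DVar.levelWeight q) (detExponent x) <
      Finsupp.weight (DVar.levelWeight q) (detExponent (detLeadingIndex k)) := by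
  have hpos : 0 < (DVar.level ((0, x.1), x.2.1) - k) ^ 2 :=
    sq_pos_of_ne_zero (sub_ne_zero.mpr (mt (level_eq_iff_eq_detLeadingIndex hx).mp hne))
  zify
  rw [coe_weight_detExponent hk hx, coe_weight_detExponent hk (detLeadingIndex_add k),
    level_detLeadingIndex]
  linarith

theorem level_eq_of_mem_support_detExponent {k : ℕ} {v : DVar}
    (hv : v ∈ (detExponent (detLeadingIndex k)).support) : v.level = k := by
  have hsum := level_add_level_eq (detLeadingIndex_add k) (detLeadingIndex k).1
  have hlevel := level_detLeadingIndex k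
  have hmem := Finsupp.support_add hv
  simp only [mem_union, Finsupp.mem_support_single] at hmem
  rcases hmem with ⟨rfl, -⟩ | ⟨rfl, -⟩
  · exact hlevel
  · linarith

theorem disjoint_detExponent_detLeadingIndex {k l : ℕ} (hkl : k ≠ l) :
    Disjoint (detExponent (detLeadingIndex k)) (detExponent (detLeadingIndex l)) := by
  refine Finsupp.disjoint_iff.mpr (disjoint_left.mpr fun v hvk hvl => hkl ?_)
  exact_mod_cast (level_eq_of_mem_support_detExponent hvk).symm.trans
    (level_eq_of_mem_support_detExponent hvl)

theorem disjoint_single_detExponent_detLeadingIndex {v : DVar} {k : ℕ} (hv : v.level ≠ k) (n : ℕ) :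
    Disjoint (Finsupp.single v n) (detExponent (detLeadingIndex k)) := by
  refine Finsupp.disjoint_iff.mpr (disjoint_left.mpr fun u hu huk => hv ?_)
  obtain rfl : u = v := mem_singleton.mp (Finsupp.support_single_subset hu)
  exact level_eq_of_mem_support_detExponent huk

theorem detExponent_ne_zero (x : Fin 2 × ℕ × ℕ) : detExponent x ≠ 0 := by
  simp [detExponent]

variable {K : Type} [CommRing K] {δ : K → K} {D : DiffPolyC K → DiffPolyC K}

theorem detC_eq_sum :
    detC K = ∑ j : Fin 2, (-1 : ℤ) ^ (j : ℕ) • (X ((0, j), 0) * X ((1, j.rev), 0)) := by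
  simp [detC, Fin.sum_univ_two, sub_eq_add_neg]

namespace IsDiffStructure

/-- The derivation `D`, as a bundled map. -/
noncomputable def toDerivation (hD : IsDiffStructure δ D) :
    Derivation ℤ (DiffPolyC K) (DiffPolyC K) :=
  Derivation.mk' (AddMonoidHom.mk' D hD.2.2.1).toIntLinearMap fun f g => by
    simp [hD.2.2.2.1, mul_comm, add_comm]

theorem coe_toDerivation (hD : IsDiffStructure δ D) : ⇑hD.toDerivation = D := rfl

theorem iterate_X_s8 (hD : IsDiffStructure δ D) (a : Fin 2 × Fin 2) (n : ℕ) :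
    D^[n] (X (a, 0)) = X (a, n) := by
  induction n with
  | zero => rfl
  | succ n ih => rw [Function.iterate_succ_apply', ih, hD.2.2.2.2.2]

theorem iterate_X_mul_X (hD : IsDiffStructure δ D) (a b : Fin 2 × Fin 2) (n : ℕ) :
    D^[n] (X (a, 0) * X (b, 0)) =
      ∑ ij ∈ antidiagonal n, n.choose ij.1 • (X (a, ij.1) * X (b, ij.2)) := by
  have hleibniz := iterate_derivation_mul hD.toDerivation (X (a, 0)) (X (b, 0)) n
  rw [hD.coe_toDerivation] at hleibniz
  simpa only [hD.iterate_X_s8] using hleibniz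

theorem iterate_detC_s8 (hD : IsDiffStructure δ D) (k : ℕ) :
    D^[k] (detC K) = ∑ x ∈ univ ×ˢ antidiagonal k,
      monomial (detExponent x) ((-1) ^ (x.1 : ℕ) * (k.choose x.2.1 : K)) := by
  have hlin : D^[k] = ⇑((hD.toDerivation : Module.End ℤ (DiffPolyC K)) ^ k) := by
    rw [Module.End.coe_pow, Derivation.coeFn_coe, hD.coe_toDerivation]
  rw [sum_product, detC_eq_sum, hlin, map_sum]
  refine sum_congr rfl fun j _ => ?_
  rw [map_zsmul, ← hlin, hD.iterate_X_mul_X, smul_sum]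
  refine sum_congr rfl fun ij _ => ?_
  have hmonomial : (X ((0, j), ij.1) * X ((1, j.rev), ij.2) : DiffPolyC K) =
      monomial (detExponent (j, ij)) 1 := by
    simp [detExponent, X, monomial_mul]
  rw [hmonomial, ← mul_one ((-1) ^ (j : ℕ) * _), ← C_mul_monomial]
  simp [mul_assoc]

theorem hasLeadingTerm_iterate_detC (hD : IsDiffStructure δ D) {q k : ℕ} (hk : k ≤ q) :
    HasLeadingTerm (DVar.levelWeight q) (D^[k] (detC K)) (detExponent (detLeadingIndex k))
      ((-1) ^ ((detLeadingIndex k).1 : ℕ) * (k.choose (detLeadingIndex k).2.1 : K)) := by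
  rw [hD.iterate_detC_s8]
  refine HasLeadingTerm.sum_monomial (s := detExponent) ?_ (fun x hx => ?_) _
  · simp [HasAntidiagonal.mem_antidiagonal, detLeadingIndex_add]
  · exact weight_detExponent_lt hk (by simpa [HasAntidiagonal.mem_antidiagonal] using hx)

end IsDiffStructure

theorem isUnit_choose_of_isUnit_factorial {R : Type*} [CommSemiring R] {q k i : ℕ}
    (hq : IsUnit (q.factorial : R)) (hk : k ≤ q) (hi : i ≤ k) : IsUnit (k.choose i : R) := by
  have hdvd : k.choose i ∣ k.factorial :=
    ⟨_, by rw [← mul_assoc, Nat.choose_mul_factorial_mul_factorial hi]⟩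
  exact isUnit_of_dvd_unit (Nat.cast_dvd_cast (hdvd.trans (Nat.factorial_dvd_factorial hk))) hq

theorem detPrime_truncated_saturated_general {K : Type} [CommRing K] {δ : K → K}
    {D : DiffPolyC K → DiffPolyC K} (hD : IsDiffStructure δ D) {q : ℕ}
    (hq : IsUnit (q.factorial : K)) {f : DiffPolyC K} {n : ℕ}
    (hf : (X ((0, 0), 0) : DiffPolyC K) ^ n * f ∈
      Ideal.span {g : DiffPolyC K | ∃ i : ℕ, 1 ≤ i ∧ i ≤ q ∧ g = D^[i] (detC K)}) :
    f ∈ Ideal.span {g : DiffPolyC K | ∃ i : ℕ, 1 ≤ i ∧ i ≤ q ∧ g = D^[i] (detC K)} := by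
  have hrange : {g : DiffPolyC K | ∃ i : ℕ, 1 ≤ i ∧ i ≤ q ∧ g = D^[i] (detC K)} =
      Set.range fun k : Set.Icc 1 q => D^[k] (detC K) := by
    ext g
    simp [and_assoc, eq_comm]
  rw [hrange] at hf ⊢
  rw [X_pow_eq_monomial] at hf
  have hunit (k : Set.Icc 1 q) : IsUnit ((-1) ^ ((detLeadingIndex k).1 : ℕ) *
      ((k : ℕ).choose (detLeadingIndex k).2.1 : K)) :=
    (isUnit_one.neg.pow _).mul
      (isUnit_choose_of_isUnit_factorial hq k.2.2 (Nat.le.intro (detLeadingIndex_add k)))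
  have hlevel (k : Set.Icc 1 q) : DVar.level ((0, 0), 0) ≠ (k : ℕ) := by
    simp [DVar.level]
  exact mem_span_range_of_monomial_mul_mem_s8 hunit
    (fun k l hkl => disjoint_detExponent_detLeadingIndex (Subtype.coe_ne_coe.mpr hkl))
    (fun k => detExponent_ne_zero _) (fun k => hD.hasLeadingTerm_iterate_detC k.2.2)
    (fun k => disjoint_single_detExponent_detLeadingIndex (hlevel k) n) hf

end Determinant

/-- For every `q ≥ 1`, the ordinary ideal `I_q` of `C` generated by
`det⁽¹⁾, …, det⁽q⁾` is saturated with respect to `c₁₁`: if `c₁₁ ^ n · f ∈ I_q` for some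
`n ≥ 0`, then `f ∈ I_q`. -/
theorem detPrime_truncated_saturated {K : Type} [Field K] [CharZero K]
    (δ : K → K) (D : DiffPolyC K → DiffPolyC K)
    (hD : IsDiffStructure δ D)
    (q : ℕ) (hq : 1 ≤ q)
    (f : DiffPolyC K) (n : ℕ)
    (hf : (X ((0, 0), 0) : DiffPolyC K) ^ n * f ∈
      Ideal.span {g : DiffPolyC K | ∃ i : ℕ, 1 ≤ i ∧ i ≤ q ∧ g = D^[i] (detC K)}) :
    f ∈ Ideal.span {g : DiffPolyC K | ∃ i : ℕ, 1 ≤ i ∧ i ≤ q ∧ g = D^[i] (detC K)} := by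
  exact detPrime_truncated_saturated_general hD (Nat.cast_ne_zero.mpr q.factorial_ne_zero).isUnit hf
end
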